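/- Assume the families A_{N,1}, …, A_{N,L} are independent, each is permutation invariant, and each satisfies the growth bound (MS). With the test graph T = (V,E) as in the construction below, for every partition π of V such that the graph of colored components GCC(T^π) is not a tree, one has τ⁰_N[T^π] = O(N^{−1}) as N → ∞. -/

import Mathlib

open MeasureTheory ProbabilityTheory Filter Matrix Asymptotics
open scoped BigOperators ENNReal
open scoped Classical

noncomputable section

/-- The diagonal projection `Δ` on `N × N` complex matrices. -/
def dproj {N : ℕ} (A : Matrix (Fin N) (Fin N) ℂ) : Matrix (Fin N) (Fin N) ℂ :=
  Matrix.of fun i j => if i = j then A i j else 0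

/-- The operator norm of a matrix acting on `ℓ²({1,…,N})`. -/
def matOpNorm {N : ℕ} (A : Matrix (Fin N) (Fin N) ℂ) : ℝ :=
  ‖Matrix.toEuclideanCLM (𝕜 := ℂ) A‖

/-! ### Multigraph combinatorics -/

section Graph

variable {V E : Type} (src tgt : E → V)

/-- Adjacency through an edge avoiding a forbidden set `F` of edges
(direction is ignored). -/
def adjOn (F : Set E) (a b : V) : Prop :=
  ∃ e, e ∉ F ∧ ((src e = a ∧ tgt e = b) ∨ (src e = b ∧ tgt e = a))

/-- Reachability in the graph, using only edges outside `F`. -/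
def reachOn (F : Set E) : V → V → Prop :=
  Relation.ReflTransGen (adjOn src tgt F)

lemma adjOn_symm (F : Set E) : Symmetric (adjOn src tgt F) := by
  rintro a b ⟨e, he, h⟩
  exact ⟨e, he, h.symm⟩

/-- The setoid of connectivity using edges outside `F`. -/
def connSetoid (F : Set E) : Setoid V :=
  ⟨reachOn src tgt F,
    ⟨fun _ => Relation.ReflTransGen.refl,
     fun h => (@Relation.ReflTransGen.stdSymm _ _ ⟨fun _ _ h' => adjOn_symm src tgt F h'⟩).symm _ _ h,
     fun h h' => Relation.ReflTransGen.trans h h'⟩⟩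

/-- Number of connected components of the graph with the edges in `F` deleted. -/
def ncompAvoiding (F : Set E) : ℕ :=
  Nat.card (Quotient (connSetoid src tgt F))

/-- Number of connected components. -/
def ncomp : ℕ := ncompAvoiding src tgt ∅

/-- The graph is connected. -/
def IsConnectedGraph : Prop := ∀ a b : V, reachOn src tgt ∅ a b

/-- A cut edge (bridge): deleting it disconnects its endpoints. -/
def IsCutEdge (e : E) : Prop := ¬ reachOn src tgt {e} (src e) (tgt e)

/-- The set of cut edges. -/
def cutEdges : Set E := {e | IsCutEdge src tgt e}

/-- The setoid whose classes are the two-edge connected components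
(connected components after deleting all cut edges). -/
def teccSetoid : Setoid V := connSetoid src tgt (cutEdges src tgt)

/-- Degree, in the forest of two-edge connected components, of a
two-edge connected component: the number of cut edges incident to it. -/
def teccDeg (c : Quotient (teccSetoid src tgt)) : ℕ :=
  Nat.card {e : E // IsCutEdge src tgt e ∧
    (Quotient.mk (teccSetoid src tgt) (src e) = c ∨
      Quotient.mk (teccSetoid src tgt) (tgt e) = c)}

/-- `𝔣(G)`: the number of leaves of the forest of two-edge connected components,
single-vertex trees of the forest counting twice. -/
def frak : ℕ :=
  Nat.card {c : Quotient (teccSetoid src tgt) // teccDeg src tgt c = 1} +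
    2 * Nat.card {c : Quotient (teccSetoid src tgt) // teccDeg src tgt c = 0}

end Graph

/-! ### Graph monomials -/

/-- A graph monomial: a finite directed multigraph with two roots and edges
labelled by a family index in `Fin L` and an index in `K`.  (Connectedness is
required separately via `IsConnectedGraph`.) -/
structure GraphMonomial (L : ℕ) (K : Type) where
  V : Type
  E : Type
  fintV : Fintype V
  fintE : Fintype E
  src : E → V
  tgt : E → V
  vin : V
  vout : V
  labL : E → Fin L
  labK : E → K

attribute [instance] GraphMonomial.fintV GraphMonomial.fintE

namespace GraphMonomial

variable {L : ℕ} {K : Type} (g : GraphMonomial L K)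

/-- Evaluation of a graph monomial in a collection of matrices. -/
def eval {N : ℕ} (A : Fin L → K → Matrix (Fin N) (Fin N) ℂ) :
    Matrix (Fin N) (Fin N) ℂ :=
  Matrix.of fun i j => ∑ φ : g.V → Fin N,
    if φ g.vin = j ∧ φ g.vout = i then
      ∏ e : g.E, A (g.labL e) (g.labK e) (φ (g.tgt e)) (φ (g.src e))
    else 0

/-- The starting vertex of a step `(e, b)`: `e` traversed forward if `b = true`,
backward otherwise. -/
def stepSrc (s : g.E × Bool) : g.V := if s.2 then g.src s.1 else g.tgt s.1

/-- The ending vertex of a step. -/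
def stepTgt (s : g.E × Bool) : g.V := if s.2 then g.tgt s.1 else g.src s.1

/-- A simple cycle of the underlying undirected multigraph: a nonempty cyclic
sequence of steps with pairwise distinct edges and pairwise distinct vertices. -/
def IsSimpleCycle (c : List (g.E × Bool)) : Prop :=
  ∃ h : c ≠ [],
    (∀ i : Fin c.length,
      g.stepTgt (c.get i) =
        g.stepSrc (c.get ⟨((i : ℕ) + 1) % c.length,
          Nat.mod_lt _ (List.length_pos_iff.mpr h)⟩)) ∧
    (c.map Prod.fst).Nodup ∧ (c.map g.stepSrc).Nodup

/-- A cycle is directed when it traverses all its edges consistently with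
their orientations (one way or the other). -/
def IsDirectedCycleList (c : List (g.E × Bool)) : Prop :=
  (∀ s ∈ c, s.2 = true) ∨ (∀ s ∈ c, s.2 = false)

/-- `S` is the edge set of some simple cycle. -/
def IsCycleEdgeSet (S : Finset g.E) : Prop :=
  ∃ c, g.IsSimpleCycle c ∧ (c.map Prod.fst).toFinset = S

/-- The underlying graph is an oriented cactus: it is connected, every simple
cycle is directed, and every edge belongs to exactly one simple cycle. -/
def IsOrientedCactus : Prop :=
  IsConnectedGraph g.src g.tgt ∧
  (∀ c, g.IsSimpleCycle c → g.IsDirectedCycleList c) ∧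
  (∀ e : g.E, ∃! S : Finset g.E, g.IsCycleEdgeSet S ∧ e ∈ S)

/-- A cactus-type monomial: an oriented cactus whose input and output coincide. -/
def IsCactusType : Prop := g.vin = g.vout ∧ g.IsOrientedCactus

/-- A member of `ℱ`: a directed simple path (oriented from the input, at the far
right, to the output, at the far left) with oriented cacti attached to the
vertices of the path (the root of each cactus being a path vertex). -/
def IsPathCactusType : Prop :=
  IsConnectedGraph g.src g.tgt ∧
  ∃ (d : ℕ) (v : Fin (d + 1) → g.V) (f : Fin d → g.E),
    Function.Injective v ∧ Function.Injective f ∧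
    (∀ j : Fin d, g.src (f j) = v j.succ ∧ g.tgt (f j) = v j.castSucc) ∧
    g.vin = v (Fin.last d) ∧ g.vout = v 0 ∧
    (∀ c, g.IsSimpleCycle c → g.IsDirectedCycleList c ∧ ∀ s ∈ c, s.1 ∉ Set.range f) ∧
    (∀ e : g.E, e ∉ Set.range f →
      ∃! S : Finset g.E, g.IsCycleEdgeSet S ∧ e ∈ S) ∧
    (∀ w : g.V, ∃! j : Fin (d + 1), reachOn g.src g.tgt (Set.range f) w (v j))

end GraphMonomial
/-! ### Random matrices, expectations, test graphs -/

/-- The entries of the random matrix `X` are measurable. -/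
def EntriesMeasurable {N : ℕ} {Ω : Type} [MeasurableSpace Ω]
    (X : Ω → Matrix (Fin N) (Fin N) ℂ) : Prop :=
  ∀ i j, Measurable fun ω => X ω i j

/-- The entries of the random matrix `X` are essentially bounded. -/
def EntriesBounded {N : ℕ} {Ω : Type} [MeasurableSpace Ω] (μ : Measure Ω)
    (X : Ω → Matrix (Fin N) (Fin N) ℂ) : Prop :=
  ∃ C : ℝ, ∀ᵐ ω ∂μ, ∀ i j, ‖X ω i j‖ ≤ C

/-- The σ-algebra generated by the entries of the matrices of a family. -/
def famSigma {N : ℕ} {Ω K : Type} [MeasurableSpace Ω]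
    (A : K → Ω → Matrix (Fin N) (Fin N) ℂ) : MeasurableSpace Ω :=
  ⨆ k : K, ⨆ i : Fin N, ⨆ j : Fin N,
    MeasurableSpace.comap (fun ω => A k ω i j) inferInstance

/-- Permutation invariance of a family of `N × N` random matrices. -/
def PermInvariant {N : ℕ} {Ω K : Type} [MeasurableSpace Ω] (μ : Measure Ω)
    (A : K → Ω → Matrix (Fin N) (Fin N) ℂ) : Prop :=
  ∀ σ : Equiv.Perm (Fin N),
    Measure.map (fun ω => fun (k : K) (i j : Fin N) => A k ω (σ i) (σ j)) μ =
      Measure.map (fun ω => fun (k : K) (i j : Fin N) => A k ω i j) μ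

/-- A test graph with matrix-valued edge labels. -/
structure TestGraph (N : ℕ) (Ω : Type) where
  V : Type
  E : Type
  fintV : Fintype V
  fintE : Fintype E
  src : E → V
  tgt : E → V
  lab : E → Ω → Matrix (Fin N) (Fin N) ℂ

attribute [instance] TestGraph.fintV TestGraph.fintE

namespace TestGraph

variable {N : ℕ} {Ω : Type} [MeasurableSpace Ω]

/-- Number of connected components `c(T)` of a test graph. -/
def ncc (T : TestGraph N Ω) : ℕ := ncomp T.src T.tgt

/-- The (unnormalized) trace observable of a test graph. -/
def tauInner (T : TestGraph N Ω) (ω : Ω) : ℂ :=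
  ∑ φ : T.V → Fin N, ∏ e : T.E, T.lab e ω (φ (T.tgt e)) (φ (T.src e))

/-- The (unnormalized) injective trace observable of a test graph. -/
def tau0Inner (T : TestGraph N Ω) (ω : Ω) : ℂ :=
  ∑ φ : T.V → Fin N,
    if Function.Injective φ then ∏ e : T.E, T.lab e ω (φ (T.tgt e)) (φ (T.src e)) else 0

/-- `τ_N[T]`. -/
def tau (T : TestGraph N Ω) (μ : Measure Ω) : ℂ :=
  ((N : ℂ) ^ T.ncc)⁻¹ * ∫ ω, T.tauInner ω ∂μ

/-- `τ⁰_N[T]`. -/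
def tau0 (T : TestGraph N Ω) (μ : Measure Ω) : ℂ :=
  ((N : ℂ) ^ T.ncc)⁻¹ * ∫ ω, T.tau0Inner ω ∂μ

/-- The quotient test graph `T^π` associated with a partition `π` of the
vertices of `T`. -/
def quot (T : TestGraph N Ω) (π : Setoid T.V) : TestGraph N Ω where
  V := Quotient π
  E := T.E
  fintV := @Quotient.fintype _ T.fintV π fun _ _ => Classical.propDecidable _
  fintE := T.fintE
  src := fun e => Quotient.mk π (T.src e)
  tgt := fun e => Quotient.mk π (T.tgt e)
  lab := T.lab

end TestGraph

/-- Monomial `D₀ X_{k(1)} D₁ ⋯ X_{k(d)} D_d` evaluated in a family of matrices: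
the coefficients are given as an arbitrary function `D : ℕ → Matrix`. -/
def monomialEval {K : Type} {N : ℕ} (A : K → Matrix (Fin N) (Fin N) ℂ)
    (dd : ℕ) (kk : ℕ → K) (D : ℕ → Matrix (Fin N) (Fin N) ℂ) :
    Matrix (Fin N) (Fin N) ℂ :=
  D 0 * (List.ofFn fun j : Fin dd => A (kk ((j : ℕ) + 1)) * D ((j : ℕ) + 1)).prod

/-- The centered product `(M₁ - ΔM₁)(M₂ - ΔM₂)⋯(Mₙ - ΔMₙ)`. -/
def centeredProd {N n : ℕ} (M : Fin n → Matrix (Fin N) (Fin N) ℂ) :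
    Matrix (Fin N) (Fin N) ℂ :=
  (List.ofFn fun i : Fin n => M i - dproj (M i)).prod

/-- Mutual independence of the families `A 1, …, A L` of random matrices. -/
def IndepFamilies {Ω K : Type} {L : ℕ} [MeasurableSpace Ω] (μ : Measure Ω)
    (A : (N : ℕ) → Fin L → K → Ω → Matrix (Fin N) (Fin N) ℂ) : Prop :=
  ∀ N : ℕ, ProbabilityTheory.iIndep (fun ℓ : Fin L => famSigma (A N ℓ)) μ

/-- Uniform boundedness, in operator norm, of families of random matrices. -/
def UnifOpNormBound {Ω K : Type} {L : ℕ} [MeasurableSpace Ω] (μ : Measure Ω)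
    (A : (N : ℕ) → Fin L → K → Ω → Matrix (Fin N) (Fin N) ℂ) : Prop :=
  ∃ C : ℝ, ∀ (N : ℕ) (ℓ : Fin L) (k : K), ∀ᵐ ω ∂μ, matOpNorm (A N ℓ k ω) ≤ C

/-- The growth bound (MS) for the family `A · ℓ`:
for all graph monomials `g₁, …, gₘ` labelled in the single family `ℓ` and having
equal input and output, `E[∏ᵢ Tr gᵢ(A_N)] = O(N^{Σᵢ 𝔣(gᵢ)/2})` as `N → ∞`. -/
def MSBound {Ω K : Type} {L : ℕ} [MeasurableSpace Ω] (μ : Measure Ω)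
    (A : (N : ℕ) → Fin L → K → Ω → Matrix (Fin N) (Fin N) ℂ) (ℓ : Fin L) : Prop :=
  ∀ (m : ℕ), 1 ≤ m → ∀ gs : Fin m → GraphMonomial L K,
    (∀ i : Fin m, IsConnectedGraph (gs i).src (gs i).tgt ∧
      (∀ e, (gs i).labL e = ℓ) ∧ (gs i).vin = (gs i).vout) →
    (fun N : ℕ => ∫ ω, ∏ i : Fin m,
        Matrix.trace ((gs i).eval fun ℓ' k => A N ℓ' k ω) ∂μ)
      =O[atTop] fun N : ℕ => (N : ℝ) ^ ((∑ i : Fin m, (frak (gs i).src (gs i).tgt : ℝ)) / 2)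
/-- The monomial `g₀(A) X_{k(1)} g₁(A) ⋯ X_{k(d)} g_d(A)` with graph-monomial
coefficients, evaluated at the family `A ℓi`. -/
def cactusMonomialEval {L : ℕ} {K : Type} {N : ℕ}
    (A : Fin L → K → Matrix (Fin N) (Fin N) ℂ) (ℓi : Fin L) (dd : ℕ)
    (kk : ℕ → K) (gg : ℕ → GraphMonomial L K) : Matrix (Fin N) (Fin N) ℂ :=
  (gg 0).eval A *
    (List.ofFn fun j : Fin dd =>
      A ℓi (kk ((j : ℕ) + 1)) * (gg ((j : ℕ) + 1)).eval A).prod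
/-! ### The test graph `T` built from the monomials `t_1, …, t_n` -/

section Construction

variable {L : ℕ} {K : Type}

/-- Cyclic successor in `Fin n`. -/
def nxt {n : ℕ} (i : Fin n) : Fin n := ⟨((i : ℕ) + 1) % n, Nat.mod_lt _ i.pos⟩

/-- Vertices of the disjoint union of the graph monomials `t_1, …, t_n`:
for each `i`, the path vertices of `t_i` are the roots of the attached cacti
`g_{0,i}, …, g_{d_i,i}`. -/
def BigV (n : ℕ) (d : Fin n → ℕ) (g : Fin n → ℕ → GraphMonomial L K) : Type :=
  Σ i : Fin n, Σ j : Fin (d i + 1), (g i (j : ℕ)).V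

instance (n : ℕ) (d : Fin n → ℕ) (g : Fin n → ℕ → GraphMonomial L K) :
    Fintype (BigV n d g) := by
  unfold BigV; infer_instance

/-- Edges: the edges of the cacti, plus the path edges (the edge `(i, j)` goes
from the path vertex `u_{i,j+1}` to `u_{i,j}` and carries the label
`(ℓ_i, k_i(j+1))`). -/
def BigE (n : ℕ) (d : Fin n → ℕ) (g : Fin n → ℕ → GraphMonomial L K) : Type :=
  (Σ i : Fin n, Σ j : Fin (d i + 1), (g i (j : ℕ)).E) ⊕ (Σ i : Fin n, Fin (d i))

instance (n : ℕ) (d : Fin n → ℕ) (g : Fin n → ℕ → GraphMonomial L K) :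
    Fintype (BigE n d g) := by
  unfold BigE; infer_instance

/-- The path vertex `u_{i,j}`, i.e. the root of the cactus `g_{j,i}`. -/
def pathVtx (n : ℕ) (d : Fin n → ℕ) (g : Fin n → ℕ → GraphMonomial L K)
    (i : Fin n) (j : Fin (d i + 1)) : BigV n d g :=
  ⟨i, j, (g i (j : ℕ)).vin⟩

/-- The input vertex of `t_i`. -/
def inVtx (n : ℕ) (d : Fin n → ℕ) (g : Fin n → ℕ → GraphMonomial L K)
    (i : Fin n) : BigV n d g :=
  pathVtx n d g i (Fin.last (d i))

/-- The output vertex of `t_i`. -/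
def outVtx (n : ℕ) (d : Fin n → ℕ) (g : Fin n → ℕ → GraphMonomial L K)
    (i : Fin n) : BigV n d g :=
  pathVtx n d g i 0

/-- The setoid identifying, for each `i` (cyclically), the input of `t_i` with
the output of `t_{i+1}`. -/
def glueSetoid (n : ℕ) (d : Fin n → ℕ) (g : Fin n → ℕ → GraphMonomial L K) :
    Setoid (BigV n d g) :=
  ⟨Relation.EqvGen fun x y =>
      ∃ i : Fin n, x = inVtx n d g i ∧ y = outVtx n d g (nxt i),
   Relation.EqvGen.is_equivalence _⟩

/-- Source map of the glued test graph `T`. -/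
def bigSrc (n : ℕ) (d : Fin n → ℕ) (g : Fin n → ℕ → GraphMonomial L K) :
    BigE n d g → Quotient (glueSetoid n d g) := fun e =>
  match e with
  | Sum.inl ⟨i, j, e'⟩ =>
      Quotient.mk (glueSetoid n d g) ⟨i, j, (g i (j : ℕ)).src e'⟩
  | Sum.inr ⟨i, j⟩ =>
      Quotient.mk (glueSetoid n d g) (pathVtx n d g i j.succ)

/-- Target map of the glued test graph `T`. -/
def bigTgt (n : ℕ) (d : Fin n → ℕ) (g : Fin n → ℕ → GraphMonomial L K) :
    BigE n d g → Quotient (glueSetoid n d g) := fun e =>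
  match e with
  | Sum.inl ⟨i, j, e'⟩ =>
      Quotient.mk (glueSetoid n d g) ⟨i, j, (g i (j : ℕ)).tgt e'⟩
  | Sum.inr ⟨i, j⟩ =>
      Quotient.mk (glueSetoid n d g) (pathVtx n d g i j.castSucc)

/-- The family index (color) carried by each edge of `T`. -/
def bigCol (n : ℕ) (ℓv : Fin n → Fin L) (d : Fin n → ℕ)
    (g : Fin n → ℕ → GraphMonomial L K) : BigE n d g → Fin L := fun e =>
  match e with
  | Sum.inl ⟨i, j, e'⟩ => (g i (j : ℕ)).labL e'
  | Sum.inr ⟨i, _⟩ => ℓv i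

/-- The vertex `v_i` of `T` (the class of the input of `t_i`). -/
def vCls (n : ℕ) (d : Fin n → ℕ) (g : Fin n → ℕ → GraphMonomial L K)
    (i : Fin n) : Quotient (glueSetoid n d g) :=
  Quotient.mk (glueSetoid n d g) (inVtx n d g i)

/-- The test graph `T`, with the matrix `A_{N,ℓ}^{(k)}` assigned to each edge
labelled `(ℓ, k)`. -/
def bigTG (n : ℕ) (ℓv : Fin n → Fin L) (d : Fin n → ℕ) (kv : Fin n → ℕ → K)
    (g : Fin n → ℕ → GraphMonomial L K) {Ω : Type} (N : ℕ)
    (A : Fin L → K → Ω → Matrix (Fin N) (Fin N) ℂ) : TestGraph N Ω where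
  V := Quotient (glueSetoid n d g)
  E := BigE n d g
  fintV := @Quotient.fintype _ inferInstance (glueSetoid n d g)
    fun _ _ => Classical.propDecidable _
  fintE := inferInstance
  src := bigSrc n d g
  tgt := bigTgt n d g
  lab := fun e =>
    match e with
    | Sum.inl ⟨i, j, e'⟩ => fun ω => A ((g i (j : ℕ)).labL e') ((g i (j : ℕ)).labK e') ω
    | Sum.inr ⟨i, j⟩ => fun ω => A (ℓv i) (kv i ((j : ℕ) + 1)) ω

end Construction
/-! ### The graph of colored components -/

section GCC

variable {V E : Type} (src tgt : E → V) {L : ℕ} (col : E → Fin L)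

/-- Connectivity using only edges of color `ℓ`. -/
def colorSetoid (ℓ : Fin L) : Setoid V :=
  connSetoid src tgt {e | col e ≠ ℓ}

/-- The colored components: maximal connected subgraphs all of whose edges
have one single color.  Such a component is encoded by its color together
with the corresponding class of vertices (which is required to contain at
least one edge of that color). -/
def ColoredComp : Type :=
  {p : Σ ℓ : Fin L, Quotient (colorSetoid src tgt col ℓ) //
    ∃ e, col e = p.1 ∧ Quotient.mk (colorSetoid src tgt col p.1) (src e) = p.2}

/-- Membership of a vertex in a colored component. -/
def memCC (v : V) (S : ColoredComp src tgt col) : Prop :=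
  Quotient.mk (colorSetoid src tgt col S.1.1) v = S.1.2

/-- The graph of colored components `GCC`: the undirected bipartite graph on
the colored components and the vertices, a vertex being joined to each colored
component it belongs to. -/
def gccGraph : SimpleGraph (ColoredComp src tgt col ⊕ V) where
  Adj x y :=
    (∃ S v, x = Sum.inl S ∧ y = Sum.inr v ∧ memCC src tgt col v S) ∨
    (∃ S v, x = Sum.inr v ∧ y = Sum.inl S ∧ memCC src tgt col v S)
  symm := by
    refine ⟨?_⟩
    rintro x y (⟨S, v, hx, hy, hm⟩ | ⟨S, v, hx, hy, hm⟩)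
    · exact Or.inr ⟨S, v, hy, hx, hm⟩
    · exact Or.inl ⟨S, v, hy, hx, hm⟩
  loopless := by
    refine ⟨?_⟩
    rintro x (⟨S, v, rfl, hy, hm⟩ | ⟨S, v, rfl, hy, hm⟩) <;> simp at hy

end GCC

/-! By permutation invariance every injective labelling has the same expected weight, and by
independence this weight factors over the colors. So, up to the order of magnitude, the expected
injective sum of `G = T^π` is `N ^ |V|` times the product over the colors `ℓ` of
`N ^ (-|V_ℓ|)` and the expected injective sum of the subgraph `G_ℓ` formed by the edges of
color `ℓ`, with `V_ℓ` the set of vertices on these edges. Inclusion–exclusion and (MS) bound the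
last factor by the largest `N ^ (𝔣(G_ℓ^ρ) / 2)` over the partitions `ρ`. It remains to see that
`2 |V| + ∑_ℓ 𝔣(G_ℓ^{ρ_ℓ}) ≤ 2 ∑_ℓ |V_ℓ|` for all `ρ_ℓ`, whose right-hand side is twice the number of
edges of `GCC(G)`.

The graph `G` inherits from `T` that it is connected and has no cut edge. If a set `W` of vertices
is left by a single edge of `G_ℓ`, lying in the colored component `S`, then one of the edges of
`GCC(G)` from `S` to `W` lies on a cycle, since otherwise that edge would be a cut edge of `G`.
Hence `∑_ℓ 𝔣(G_ℓ^{ρ_ℓ})` is at most the sum over the colored components of their degrees in the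
graph `H` of edges of `GCC(G)` lying on a cycle, each rounded up to `2`. If `GCC(G)` is not a tree
then `H` has an edge, no vertex has degree `1` in `H`, and each vertex isolated in `H` can be
charged to a bridge of `GCC(G)` of its own; thus the sum over all vertices of `max 2 deg_H` is at
most twice the number of edges of `GCC(G)`. -/

/-! ### Bridges -/

section NonBridge

variable {W : Type*} {Γ : SimpleGraph W}

/-- The spanning subgraph of `Γ` formed by the edges which lie on a cycle; the degrees in it
measure how far `Γ` is from being a forest. -/
def nonBridgeGraph (Γ : SimpleGraph W) : SimpleGraph W :=
  Γ.deleteEdges {e | Γ.IsBridge e}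

lemma nonBridgeGraph_adj {x y : W} :
    (nonBridgeGraph Γ).Adj x y ↔ Γ.Adj x y ∧ ¬ Γ.IsBridge s(x, y) :=
  SimpleGraph.deleteEdges_adj

lemma nonBridgeGraph_le (Γ : SimpleGraph W) : nonBridgeGraph Γ ≤ Γ :=
  Γ.deleteEdges_le _

lemma nonBridgeGraph_ne_bot (h : ¬ Γ.IsAcyclic) : nonBridgeGraph Γ ≠ ⊥ := by
  rw [SimpleGraph.isAcyclic_iff_forall_adj_isBridge] at h
  push Not at h
  obtain ⟨x, y, hxy, hb⟩ := h
  exact SimpleGraph.ne_bot_iff_exists_adj.mpr ⟨x, y, nonBridgeGraph_adj.mpr ⟨hxy, hb⟩⟩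

lemma degree_nonBridgeGraph_ne_one (x : W) [Fintype ((nonBridgeGraph Γ).neighborSet x)] :
    (nonBridgeGraph Γ).degree x ≠ 1 := by
  intro hdeg
  obtain ⟨y, hxy, huniq⟩ := SimpleGraph.degree_eq_one_iff_existsUnique_adj.mp hdeg
  obtain ⟨hadj, hb⟩ := nonBridgeGraph_adj.mp hxy
  rw [SimpleGraph.isBridge_iff_forall_cycle_notMem (show s(x, y) ∈ Γ.edgeSet from hadj)] at hb
  push Not at hb
  obtain ⟨u, p, hp, hxyp⟩ := hb
  have hsub : p.toSubgraph.neighborSet x ⊆ {y} := by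
    intro z hz
    have hzp : s(x, z) ∈ p.edges := by rwa [← SimpleGraph.Walk.mem_edges_toSubgraph]
    exact huniq z <| nonBridgeGraph_adj.mpr
      ⟨hz.adj_sub, fun hb => hb.notMem_edges_of_isCycle hp hzp⟩
  have htwo := hp.ncard_neighborSet_toSubgraph_eq_two (p.fst_mem_support_of_mem_edges hxyp)
  have hle := Set.ncard_le_ncard hsub
  rw [htwo, Set.ncard_singleton] at hle
  exact absurd hle (by norm_num)

lemma exists_adj_dist_eq_add_one (hΓ : Γ.Connected) {r x : W} (hx : x ≠ r) :
    ∃ y, Γ.Adj x y ∧ Γ.dist r x = Γ.dist r y + 1 := by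
  obtain ⟨p, hp⟩ := hΓ.exists_walk_length_eq_dist x r
  cases p with
  | nil => exact absurd rfl hx
  | @cons _ y _ hxy q =>
    refine ⟨y, hxy, ?_⟩
    have hq : Γ.dist y r ≤ q.length := SimpleGraph.dist_le q
    have htri : Γ.dist x r ≤ Γ.dist x y + Γ.dist y r := hΓ.dist_triangle
    rw [SimpleGraph.dist_eq_one_iff_adj.mpr hxy] at htri
    rw [SimpleGraph.Walk.length_cons] at hp
    rw [SimpleGraph.dist_comm, SimpleGraph.dist_comm (u := r)]
    omega

-- Each isolated vertex is charged to the first edge of a geodesic towards a fixed vertex of `H`.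
lemma card_degree_eq_zero_le_card_sdiff [Fintype W] (hΓ : Γ.Connected) {H : SimpleGraph W}
    (hH : H ≠ ⊥) :
    (Finset.univ.filter fun x => H.degree x = 0).card ≤
      (Γ.edgeFinset \ H.edgeFinset).card := by
  obtain ⟨r, s, hrs⟩ := SimpleGraph.ne_bot_iff_exists_adj.mp hH
  have hiso : ∀ x, H.degree x = 0 → ∀ y, ¬ H.Adj x y := fun x hx y hxy =>
    (H.degree_pos_iff_exists_adj x).mpr ⟨y, hxy⟩ |>.ne' hx
  have hpar : ∀ x, H.degree x = 0 → ∃ y, Γ.Adj x y ∧ Γ.dist r x = Γ.dist r y + 1 :=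
    fun x hx => exists_adj_dist_eq_add_one hΓ (by rintro rfl; exact hiso x hx s hrs)
  choose! par hadj hdist using hpar
  refine Finset.card_le_card_of_injOn (fun x => s(x, par x)) ?_ ?_
  · intro x hx
    replace hx : H.degree x = 0 := by simpa using hx
    simpa using ⟨hadj x hx, hiso x hx _⟩
  · intro x hx y hy hxy
    replace hx := hdist x (by simpa using hx)
    replace hy := hdist y (by simpa using hy)
    rcases Sym2.eq_iff.mp hxy with h | ⟨rfl, h⟩
    · exact h.1
    · rw [h] at hx
      omega

lemma sum_max_two_degree_nonBridgeGraph_le [Fintype W] (hΓ : Γ.Connected)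
    (hcyc : ¬ Γ.IsAcyclic) :
    ∑ x, max 2 ((nonBridgeGraph Γ).degree x) ≤ 2 * Γ.edgeFinset.card := by
  have hmax : ∀ x, max 2 ((nonBridgeGraph Γ).degree x) =
      (nonBridgeGraph Γ).degree x + if (nonBridgeGraph Γ).degree x = 0 then 2 else 0 := by
    intro x
    have := degree_nonBridgeGraph_ne_one (Γ := Γ) x
    split_ifs <;> omega
  have hcard := Finset.card_sdiff_add_card_eq_card
    (SimpleGraph.edgeFinset_subset_edgeFinset.mpr (nonBridgeGraph_le Γ))
  have hiso := card_degree_eq_zero_le_card_sdiff hΓ (nonBridgeGraph_ne_bot hcyc)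
  rw [Finset.sum_congr rfl fun x _ => hmax x, Finset.sum_add_distrib,
    SimpleGraph.sum_degrees_eq_twice_card_edges, ← Finset.sum_filter, Finset.sum_const,
    smul_eq_mul]
  omega

lemma eq_of_isBridge_of_reachable_deleteIncidenceSet {s v x : W} (hv : Γ.Adj s v)
    (hb : Γ.IsBridge s(s, v)) (hx : Γ.Adj s x)
    (h : (Γ.deleteIncidenceSet s).Reachable v x) : x = v := by
  by_contra hne
  have hle : Γ.deleteIncidenceSet s ≤ Γ.deleteEdges {s(s, v)} := by
    refine SimpleGraph.deleteEdges_anti (Set.singleton_subset_iff.mpr ?_)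
    exact ⟨hv, Sym2.mem_mk_left s v⟩
  have hsx : (Γ.deleteEdges {s(s, v)}).Adj s x := by
    simp [SimpleGraph.deleteEdges_adj, hx, hne, hv.ne]
  exact hb (hsx.reachable.trans (h.mono hle).symm)

end NonBridge

/-! ### Connectivity of multigraphs -/

section Connectivity

variable {V E V' E' : Type} {src tgt : E → V} {src' tgt' : E' → V'} {F : Set E}

-- Minimality stands in for induction along paths: it is applied to the relation to be propagated.
lemma connSetoid_le_iff {r : Setoid V} :
    connSetoid src tgt F ≤ r ↔ ∀ e ∉ F, r (src e) (tgt e) := by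
  refine ⟨fun h e he => h (Relation.ReflTransGen.single ⟨e, he, Or.inl ⟨rfl, rfl⟩⟩), ?_⟩
  intro h a b hab
  induction hab with
  | refl => exact r.refl a
  | tail _ hstep ih =>
    obtain ⟨e, he, ⟨rfl, rfl⟩ | ⟨rfl, rfl⟩⟩ := hstep
    · exact r.trans ih (h e he)
    · exact r.trans ih (r.symm (h e he))

lemma reachOn_symm {a b : V} (h : reachOn src tgt F a b) : reachOn src tgt F b a :=
  (connSetoid src tgt F).symm h

lemma reachOn_edge {e : E} (he : e ∉ F) : reachOn src tgt F (src e) (tgt e) :=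
  connSetoid_le_iff.mp le_rfl e he

lemma apply_eq_of_reachOn {X : Type*} {f : V → X} (hf : ∀ e ∉ F, f (src e) = f (tgt e))
    {a b : V} (h : reachOn src tgt F a b) : f a = f b :=
  connSetoid_le_iff (r := Setoid.ker f) |>.mpr hf h

lemma reachOn_map {F' : Set E'} {p : V → V'}
    (hp : ∀ e ∉ F, reachOn src' tgt' F' (p (src e)) (p (tgt e)))
    {a b : V} (h : reachOn src tgt F a b) : reachOn src' tgt' F' (p a) (p b) :=
  connSetoid_le_iff (r := (connSetoid src' tgt' F').comap p) |>.mpr hp h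

lemma reachOn_comp (p : V → V') {a b : V} (h : reachOn src tgt F a b) :
    reachOn (p ∘ src) (p ∘ tgt) F (p a) (p b) :=
  reachOn_map (fun _ he => reachOn_edge (src := p ∘ src) (tgt := p ∘ tgt) he) h

lemma IsConnectedGraph.comp {p : V → V'} (hp : Function.Surjective p)
    (h : IsConnectedGraph src tgt) : IsConnectedGraph (p ∘ src) (p ∘ tgt) := by
  intro a b
  obtain ⟨a, rfl⟩ := hp a
  obtain ⟨b, rfl⟩ := hp b
  exact reachOn_comp p (h a b)

lemma not_isCutEdge_comp (p : V → V') {e : E} (h : ¬ IsCutEdge src tgt e) :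
    ¬ IsCutEdge (p ∘ src) (p ∘ tgt) e := by
  simp only [IsCutEdge, not_not] at h ⊢
  exact reachOn_comp p h

lemma ncomp_eq_one [Nonempty V] (h : IsConnectedGraph src tgt) : ncomp src tgt = 1 := by
  rw [ncomp, ncompAvoiding, Nat.card_eq_one_iff_unique]
  refine ⟨⟨?_⟩, ⟨Quotient.mk _ (Classical.arbitrary V)⟩⟩
  rintro ⟨a⟩ ⟨b⟩
  exact Quotient.sound (h a b)

end Connectivity

/-! ### Colored components of a multigraph without cut edges -/

section ColoredComponents

variable {V E : Type} {src tgt : E → V} {L : ℕ} {col : E → Fin L}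

instance [Finite V] : Finite (ColoredComp src tgt col) := by
  unfold ColoredComp; infer_instance

instance [Finite V] : Fintype (ColoredComp src tgt col) := Fintype.ofFinite _

variable (src tgt col) in
/-- The colored component containing a given edge. -/
def compOfEdge (e : E) : ColoredComp src tgt col :=
  ⟨⟨col e, Quotient.mk _ (src e)⟩, e, rfl, rfl⟩

lemma memCC_src (e : E) : memCC src tgt col (src e) (compOfEdge src tgt col e) := rfl

lemma memCC_tgt (e : E) : memCC src tgt col (tgt e) (compOfEdge src tgt col e) :=
  Quotient.sound (reachOn_symm (reachOn_edge fun h => h rfl))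

lemma exists_memCC (S : ColoredComp src tgt col) : ∃ v, memCC src tgt col v S :=
  S.2.imp' src fun _ h => h.2

lemma gccGraph_adj {S : ColoredComp src tgt col} {v : V} :
    (gccGraph src tgt col).Adj (Sum.inl S) (Sum.inr v) ↔ memCC src tgt col v S := by
  simp [gccGraph]

lemma gccGraph_connected [Nonempty V] (hconn : IsConnectedGraph src tgt) :
    (gccGraph src tgt col).Connected := by
  have hedge : ∀ e, (gccGraph src tgt col).Reachable (Sum.inr (src e)) (Sum.inr (tgt e)) :=
    fun e => (gccGraph_adj.mpr (memCC_src e)).symm.reachable.trans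
      (gccGraph_adj.mpr (memCC_tgt e)).reachable
  have hvtx : ∀ a b, (gccGraph src tgt col).Reachable (Sum.inr a) (Sum.inr b) := fun a b =>
    connSetoid_le_iff (r := (gccGraph src tgt col).reachableSetoid.comap Sum.inr)
      |>.mpr (fun e _ => hedge e) (hconn a b)
  have hcomp : ∀ x, ∃ v, (gccGraph src tgt col).Reachable x (Sum.inr v) := by
    rintro (S | v)
    · exact (exists_memCC S).imp fun v hv => (gccGraph_adj.mpr hv).reachable
    · exact ⟨v, .refl _⟩
  obtain ⟨v₀⟩ := ‹Nonempty V›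
  refine { preconnected := fun x y => ?_, nonempty := ⟨Sum.inr v₀⟩ }
  obtain ⟨v, hxv⟩ := hcomp x
  obtain ⟨w, hyw⟩ := hcomp y
  exact hxv.trans ((hvtx v w).trans hyw.symm)

/-- The edges of color `ℓ` having exactly one endpoint in `W`. -/
def colorBoundary (src tgt : E → V) (col : E → Fin L) (ℓ : Fin L) (W : Set V) : Set E :=
  {e | col e = ℓ ∧ ¬ (src e ∈ W ↔ tgt e ∈ W)}

lemma exists_nonBridgeGraph_adj_of_colorBoundary_eq_singleton
    (hcut : ∀ e, ¬ IsCutEdge src tgt e) {W : Set V} {e₀ : E}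
    (hW : colorBoundary src tgt col (col e₀) W = {e₀}) :
    ∃ v ∈ W, (nonBridgeGraph (gccGraph src tgt col)).Adj
      (Sum.inl (compOfEdge src tgt col e₀)) (Sum.inr v) := by
  set Γ := gccGraph src tgt col
  set S := compOfEdge src tgt col e₀
  by_contra! hbridge
  -- A vertex of `S` reached from `v ∈ W ∩ S` without crossing `S` must be `v` itself.
  let P : V → Prop := fun x => ∃ v ∈ W, memCC src tgt col v S ∧
    (Γ.deleteIncidenceSet (Sum.inl S)).Reachable (Sum.inr v) (Sum.inr x)
  have hP : ∀ x, memCC src tgt col x S → (P x ↔ x ∈ W) := by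
    refine fun x hx => ⟨?_, fun hxW => ⟨x, hxW, hx, .refl _⟩⟩
    rintro ⟨v, hvW, hv, hvx⟩
    have hb : Γ.IsBridge s(Sum.inl S, Sum.inr v) := by
      by_contra hb
      exact hbridge v hvW (nonBridgeGraph_adj.mpr ⟨gccGraph_adj.mpr hv, hb⟩)
    have := eq_of_isBridge_of_reachable_deleteIncidenceSet (gccGraph_adj.mpr hv) hb
      (gccGraph_adj.mpr hx) hvx
    rwa [Sum.inr_injective this]
  have hedge : ∀ e ∉ ({e₀} : Set E), P (src e) = P (tgt e) := by
    intro e he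
    by_cases hS : compOfEdge src tgt col e = S
    · have hcol : col e = col e₀ := congrArg (fun S => S.1.1) hS
      have hcross : e ∉ colorBoundary src tgt col (col e₀) W := hW ▸ he
      rw [hP _ (hS ▸ memCC_src e), hP _ (hS ▸ memCC_tgt e)]
      simpa [colorBoundary, hcol] using hcross
    · have hadj : ∀ y, memCC src tgt col y (compOfEdge src tgt col e) →
          (Γ.deleteIncidenceSet (Sum.inl S)).Adj (Sum.inl (compOfEdge src tgt col e))
            (Sum.inr y) := by
        intro y hy
        simpa [SimpleGraph.deleteIncidenceSet_adj, hS] using gccGraph_adj.mpr hy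
      have hreach := (hadj _ (memCC_src e)).symm.reachable.trans (hadj _ (memCC_tgt e)).reachable
      refine propext <| exists_congr fun v => and_congr_right' <| and_congr_right' ?_
      exact ⟨fun h => h.trans hreach, fun h => h.trans hreach.symm⟩
  have hends := apply_eq_of_reachOn hedge (not_not.mp (hcut e₀))
  rw [hP _ (memCC_src e₀), hP _ (memCC_tgt e₀)] at hends
  exact (hW.ge rfl : e₀ ∈ colorBoundary src tgt col (col e₀) W).2 (iff_of_eq hends)

lemma memCC_subset_of_colorBoundary_eq_empty {S : ColoredComp src tgt col} {W : Set V}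
    (hW : colorBoundary src tgt col S.1.1 W = ∅) {v : V} (hv : v ∈ W)
    (hvS : memCC src tgt col v S) : {w | memCC src tgt col w S} ⊆ W := by
  intro w hw
  have hedge : ∀ e ∉ {e | col e ≠ S.1.1}, (src e ∈ W) = (tgt e ∈ W) := by
    intro e he
    have hcross : e ∉ colorBoundary src tgt col S.1.1 W := hW ▸ Set.notMem_empty e
    simpa [colorBoundary, not_not.mp he] using hcross
  exact apply_eq_of_reachOn hedge (Quotient.exact (hvS.trans hw.symm)) ▸ hv

variable [Fintype V]

/-- The contribution of a vertex set `W` to the degree, rounded up to at least `2`, of the colored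
component `S` in the graph of non-bridge edges of `GCC`: all of `2` if `W` contains `S`. -/
def degShare (src tgt : E → V) (col : E → Fin L) (W : Set V) (S : ColoredComp src tgt col) : ℕ :=
  if {v | memCC src tgt col v S} ⊆ W then 2
  else (Finset.univ.filter fun v =>
    v ∈ W ∧ (nonBridgeGraph (gccGraph src tgt col)).Adj (Sum.inl S) (Sum.inr v)).card

lemma two_sub_ncard_colorBoundary_le [Finite E] (hcut : ∀ e, ¬ IsCutEdge src tgt e) {ℓ : Fin L}
    {W : Set V} {v : V} (hv : v ∈ W) {S : ColoredComp src tgt col} (hS : S.1.1 = ℓ)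
    (hvS : memCC src tgt col v S) :
    2 - (colorBoundary src tgt col ℓ W).ncard ≤
      ∑ S : ColoredComp src tgt col with S.1.1 = ℓ, degShare src tgt col W S := by
  subst hS
  have hle : ∀ T : ColoredComp src tgt col, T.1.1 = S.1.1 → degShare src tgt col W T ≤
      ∑ S' : ColoredComp src tgt col with S'.1.1 = S.1.1, degShare src tgt col W S' :=
    fun T hT => Finset.single_le_sum_of_canonicallyOrdered (by simpa using hT)
  obtain h | h | h : (colorBoundary src tgt col S.1.1 W).ncard = 0 ∨
      (colorBoundary src tgt col S.1.1 W).ncard = 1 ∨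
      2 ≤ (colorBoundary src tgt col S.1.1 W).ncard := by omega
  · have hsub := memCC_subset_of_colorBoundary_eq_empty
      ((Set.ncard_eq_zero (Set.toFinite _)).mp h) hv hvS
    have hshare : degShare src tgt col W S = 2 := if_pos hsub
    have := hle S rfl
    omega
  · obtain ⟨e₀, he₀⟩ := Set.ncard_eq_one.mp h
    have hcol : col e₀ = S.1.1 := (he₀.ge rfl : e₀ ∈ colorBoundary _ _ _ _ _).1
    obtain ⟨w, hwW, hw⟩ := exists_nonBridgeGraph_adj_of_colorBoundary_eq_singleton hcut
      (hcol ▸ he₀)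
    have hshare : 1 ≤ degShare src tgt col W (compOfEdge src tgt col e₀) := by
      rw [degShare]
      split_ifs
      · exact one_le_two
      · exact Finset.card_pos.mpr ⟨w, by simpa using ⟨hwW, hw⟩⟩
    have := hle (compOfEdge src tgt col e₀) hcol
    omega
  · omega

lemma degShare_eq_zero {W : Set V} {S : ColoredComp src tgt col}
    (h : ∀ v ∈ W, ¬ memCC src tgt col v S) : degShare src tgt col W S = 0 := by
  obtain ⟨v, hv⟩ := exists_memCC S
  rw [degShare, if_neg fun hsub => h v (hsub hv) hv, Finset.card_eq_zero,
    Finset.filter_eq_empty_iff]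
  exact fun w _ hw => h w hw.1 (gccGraph_adj.mp ((nonBridgeGraph_le _) hw.2))

lemma sum_degShare_le {I : Type} [Fintype I] {W : I → Set V}
    (hW : Pairwise (Function.onFun Disjoint W)) (S : ColoredComp src tgt col) :
    ∑ i, degShare src tgt col (W i) S ≤
      max 2 ((nonBridgeGraph (gccGraph src tgt col)).degree (Sum.inl S)) := by
  by_cases hfull : ∃ i₀, {v | memCC src tgt col v S} ⊆ W i₀
  · obtain ⟨i₀, hi₀⟩ := hfull
    have hzero : ∀ i, i ≠ i₀ → degShare src tgt col (W i) S = 0 := fun i hi =>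
      degShare_eq_zero fun v hv hvS => (hW hi).le_bot ⟨hv, hi₀ hvS⟩
    rw [Fintype.sum_eq_single i₀ hzero, degShare, if_pos hi₀]
    exact le_max_left _ _
  · push Not at hfull
    refine le_max_of_le_right ?_
    simp only [degShare, hfull, if_false]
    rw [← Finset.card_biUnion, ← SimpleGraph.card_neighborFinset_eq_degree,
      ← Finset.card_image_of_injective _ (Sum.inr_injective (α := ColoredComp src tgt col))]
    · refine Finset.card_le_card fun x hx => ?_
      simp only [Finset.mem_image, Finset.mem_biUnion, Finset.mem_filter] at hx
      obtain ⟨v, ⟨i, -, -, -, hv⟩, rfl⟩ := hx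
      simpa using hv
    · intro i _ j _ hij
      refine Finset.disjoint_left.mpr fun v hv hv' => ?_
      simp only [Finset.mem_filter] at hv hv'
      exact (hW hij).le_bot ⟨hv.2.1, hv'.2.1⟩

/-- The total degree, each rounded up to at least `2`, of the colored components of color `ℓ` in
the graph of non-bridge edges of `GCC`. It bounds `𝔣` of every quotient of the subgraph of
color `ℓ`. -/
def leafBound (src tgt : E → V) (col : E → Fin L) (ℓ : Fin L) : ℕ :=
  ∑ S : ColoredComp src tgt col with S.1.1 = ℓ,
    max 2 ((nonBridgeGraph (gccGraph src tgt col)).degree (Sum.inl S))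

lemma sum_two_sub_ncard_colorBoundary_le [Finite E] (hcut : ∀ e, ¬ IsCutEdge src tgt e)
    (ℓ : Fin L) {I : Type} [Fintype I] {W : I → Set V}
    (hW : Pairwise (Function.onFun Disjoint W))
    (hne : ∀ i, ∃ v ∈ W i, ∃ S : ColoredComp src tgt col, S.1.1 = ℓ ∧ memCC src tgt col v S) :
    ∑ i, (2 - (colorBoundary src tgt col ℓ (W i)).ncard) ≤ leafBound src tgt col ℓ :=
  calc ∑ i, (2 - (colorBoundary src tgt col ℓ (W i)).ncard)
    _ ≤ ∑ i, ∑ S : ColoredComp src tgt col with S.1.1 = ℓ, degShare src tgt col (W i) S := by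
      refine Finset.sum_le_sum fun i _ => ?_
      obtain ⟨v, hv, S, hS, hvS⟩ := hne i
      exact two_sub_ncard_colorBoundary_le hcut hv hS hvS
    _ = ∑ S : ColoredComp src tgt col with S.1.1 = ℓ, ∑ i, degShare src tgt col (W i) S :=
      Finset.sum_comm
    _ ≤ leafBound src tgt col ℓ := Finset.sum_le_sum fun S _ => sum_degShare_le hW S

end ColoredComponents

section ColorGraph

variable {V E : Type} (src tgt : E → V) {L : ℕ} (col : E → Fin L) (ℓ : Fin L)

/-- The vertices incident to an edge of color `ℓ`. -/
def ColorVtx : Type := {v : V // ∃ e, col e = ℓ ∧ (src e = v ∨ tgt e = v)}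

instance [Finite V] : Finite (ColorVtx src tgt col ℓ) := by
  unfold ColorVtx; infer_instance

instance [Finite V] : Fintype (ColorVtx src tgt col ℓ) := Fintype.ofFinite _

/-- The edges of color `ℓ`. -/
abbrev ColorEdge : Type := {e : E // col e = ℓ}

/-- The source map of the subgraph of color `ℓ`. -/
def colorSrc (e : ColorEdge col ℓ) : ColorVtx src tgt col ℓ := ⟨src e.1, e.1, e.2, Or.inl rfl⟩

/-- The target map of the subgraph of color `ℓ`. -/
def colorTgt (e : ColorEdge col ℓ) : ColorVtx src tgt col ℓ := ⟨tgt e.1, e.1, e.2, Or.inr rfl⟩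

variable {src tgt col ℓ}

lemma ColorVtx.exists_memCC (v : ColorVtx src tgt col ℓ) :
    ∃ S : ColoredComp src tgt col, S.1.1 = ℓ ∧ memCC src tgt col v.1 S := by
  obtain ⟨e, he, hv | hv⟩ := v.2
  · exact ⟨compOfEdge src tgt col e, he, hv ▸ memCC_src e⟩
  · exact ⟨compOfEdge src tgt col e, he, hv ▸ memCC_tgt e⟩

lemma memCC_unique {S T : ColoredComp src tgt col} {v : V} (hST : S.1.1 = T.1.1)
    (hS : memCC src tgt col v S) (hT : memCC src tgt col v T) : S = T := by
  obtain ⟨⟨ℓ, q⟩, _⟩ := S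
  obtain ⟨⟨ℓ', q'⟩, _⟩ := T
  obtain rfl : ℓ = ℓ' := hST
  obtain rfl : q = q' := hS.symm.trans hT
  rfl

lemma memCC.exists_edge {S : ColoredComp src tgt col} {v : V} (h : memCC src tgt col v S) :
    ∃ e, col e = S.1.1 ∧ (src e = v ∨ tgt e = v) := by
  obtain ⟨e, he, hm⟩ := S.2
  have hreach : reachOn src tgt {e | col e ≠ S.1.1} (src e) v := Quotient.exact (hm.trans h.symm)
  rcases Relation.ReflTransGen.cases_tail hreach with h' | ⟨y, -, e', he', h' | h'⟩
  · exact ⟨e, he, Or.inl h'.symm⟩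
  · exact ⟨e', not_not.mp he', Or.inr h'.2⟩
  · exact ⟨e', not_not.mp he', Or.inl h'.1⟩

variable [Fintype V]

lemma card_edgeFinset_gccGraph_le :
    (gccGraph src tgt col).edgeFinset.card ≤ ∑ ℓ, Fintype.card (ColorVtx src tgt col ℓ) := by
  rw [← Fintype.card_sigma, ← Finset.card_univ]
  choose comp hcol hmem using fun p : Σ ℓ, ColorVtx src tgt col ℓ => p.2.exists_memCC
  refine Finset.card_le_card_of_surjOn (fun p => s(Sum.inl (comp p), Sum.inr p.2.1)) ?_
  have hsurj : ∀ (S : ColoredComp src tgt col) v, memCC src tgt col v S →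
      ∃ p, s(Sum.inl (comp p), Sum.inr p.2.1) = s(Sum.inl S, Sum.inr v) := by
    intro S v hv
    let p : Σ ℓ, ColorVtx src tgt col ℓ := ⟨S.1.1, v, hv.exists_edge⟩
    exact ⟨p, by rw [memCC_unique (hcol p) (hmem p) hv]⟩
  intro z hz
  induction z with
  | h x y =>
    rcases (by simpa using hz : (gccGraph src tgt col).Adj x y) with
      ⟨S, v, rfl, rfl, hv⟩ | ⟨S, v, rfl, rfl, hv⟩
    · simpa using hsurj S v hv
    · rw [Sym2.eq_swap]
      simpa using hsurj S v hv

lemma two_mul_card_add_sum_leafBound_le [Nonempty V] (hconn : IsConnectedGraph src tgt)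
    (htree : ¬ (gccGraph src tgt col).IsTree) :
    2 * Fintype.card V + ∑ ℓ, leafBound src tgt col ℓ ≤
      2 * ∑ ℓ, Fintype.card (ColorVtx src tgt col ℓ) := by
  have hΓ : (gccGraph src tgt col).Connected := gccGraph_connected hconn
  have hsum := sum_max_two_degree_nonBridgeGraph_le hΓ fun hac => htree ⟨hΓ, hac⟩
  have hV : 2 * Fintype.card V ≤
      ∑ v : V, max 2 ((nonBridgeGraph (gccGraph src tgt col)).degree (Sum.inr v)) := by
    rw [mul_comm, ← smul_eq_mul, ← Finset.card_univ, ← Finset.sum_const]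
    exact Finset.sum_le_sum fun v _ => le_max_left _ _
  have hcomp : ∑ ℓ, leafBound src tgt col ℓ = ∑ S : ColoredComp src tgt col,
      max 2 ((nonBridgeGraph (gccGraph src tgt col)).degree (Sum.inl S)) :=
    Finset.sum_fiberwise _ _ _
  rw [Fintype.sum_sum_type] at hsum
  have := card_edgeFinset_gccGraph_le (src := src) (tgt := tgt) (col := col)
  omega

end ColorGraph

/-! ### Leaves of the forest of two-edge connected components -/

section Leaves

variable {V E : Type} (src tgt : E → V)

/-- The connected components of a multigraph. -/
abbrev Comp : Type := Quotient (connSetoid src tgt ∅)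

/-- The vertices of a connected component. -/
abbrev CompVtx (C : Comp src tgt) : Type := {v : V // Quotient.mk (connSetoid src tgt ∅) v = C}

/-- The edges of a connected component. -/
abbrev CompEdge (C : Comp src tgt) : Type :=
  {e : E // Quotient.mk (connSetoid src tgt ∅) (src e) = C}

variable {src tgt}

lemma mk_src_eq_mk_tgt {F : Set E} {e : E} (he : e ∉ F) :
    Quotient.mk (connSetoid src tgt F) (src e) = Quotient.mk _ (tgt e) :=
  Quotient.sound (reachOn_edge he)

variable (src tgt) in
/-- The source map of a connected component. -/
def compSrc (C : Comp src tgt) (e : CompEdge src tgt C) : CompVtx src tgt C := ⟨src e.1, e.2⟩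

variable (src tgt) in
/-- The target map of a connected component. -/
def compTgt (C : Comp src tgt) (e : CompEdge src tgt C) : CompVtx src tgt C :=
  ⟨tgt e.1, (mk_src_eq_mk_tgt (Set.notMem_empty e.1)).symm.trans e.2⟩

variable {C : Comp src tgt}

lemma reachOn_comp_iff {F : Set E} {a b : CompVtx src tgt C} :
    reachOn (compSrc src tgt C) (compTgt src tgt C) (Subtype.val ⁻¹' F) a b ↔
      reachOn src tgt F a.1 b.1 := by
  refine ⟨reachOn_map fun e he => reachOn_edge (e := e.1) he, fun h => ?_⟩
  let f : V → Σ C, Quotient (connSetoid (compSrc src tgt C) (compTgt src tgt C)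
      (Subtype.val ⁻¹' F)) := fun v => ⟨Quotient.mk _ v, Quotient.mk _ ⟨v, rfl⟩⟩
  have hf : ∀ {C} (v : CompVtx src tgt C), f v.1 = ⟨C, Quotient.mk _ v⟩ := by
    rintro _ ⟨v, rfl⟩
    rfl
  have hedge : ∀ e ∉ F, f (src e) = f (tgt e) := by
    intro e he
    let e' : CompEdge src tgt (Quotient.mk _ (src e)) := ⟨e, rfl⟩
    have hst : reachOn (compSrc src tgt _) (compTgt src tgt _) (Subtype.val ⁻¹' F)
        (compSrc src tgt _ e') (compTgt src tgt _ e') := reachOn_edge he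
    change f (compSrc src tgt _ e').1 = f (compTgt src tgt _ e').1
    rw [hf, hf]
    exact congrArg (Sigma.mk _) (Quotient.sound hst)
  have hab := apply_eq_of_reachOn hedge h
  rw [hf a, hf b] at hab
  exact Quotient.exact (eq_of_heq (Sigma.mk.inj hab).2)

lemma isConnectedGraph_comp (C : Comp src tgt) :
    IsConnectedGraph (compSrc src tgt C) (compTgt src tgt C) := fun a b =>
  reachOn_comp_iff (F := ∅) |>.mpr (Quotient.exact (a.2.trans b.2.symm))

lemma isCutEdge_comp_iff {e : CompEdge src tgt C} :
    IsCutEdge (compSrc src tgt C) (compTgt src tgt C) e ↔ IsCutEdge src tgt e.1 := by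
  have h : ({e} : Set (CompEdge src tgt C)) = Subtype.val ⁻¹' {e.1} := by
    ext e'
    simp [Subtype.ext_iff]
  rw [IsCutEdge, h, reachOn_comp_iff]
  rfl

lemma teccSetoid_comp_iff {a b : CompVtx src tgt C} :
    teccSetoid (compSrc src tgt C) (compTgt src tgt C) a b ↔ teccSetoid src tgt a.1 b.1 := by
  have h : cutEdges (compSrc src tgt C) (compTgt src tgt C) =
      Subtype.val ⁻¹' cutEdges src tgt := Set.ext fun e => isCutEdge_comp_iff
  rw [teccSetoid, h]
  exact reachOn_comp_iff

lemma mk_eq_mk_of_teccSetoid {a b : V} (h : teccSetoid src tgt a b) :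
    Quotient.mk (connSetoid src tgt ∅) a = Quotient.mk _ b :=
  apply_eq_of_reachOn (fun e _ => mk_src_eq_mk_tgt (Set.notMem_empty e)) h

lemma teccDeg_comp (a : CompVtx src tgt C) :
    teccDeg (compSrc src tgt C) (compTgt src tgt C) (Quotient.mk _ a) =
      teccDeg src tgt (Quotient.mk _ a.1) := by
  simp only [teccDeg, Quotient.eq]
  refine Nat.card_congr <| (Equiv.subtypeEquivRight fun e => ?_).trans
    (Equiv.subtypeSubtypeEquivSubtype fun {e} he => ?_)
  · exact and_congr isCutEdge_comp_iff (or_congr teccSetoid_comp_iff teccSetoid_comp_iff)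
  · rcases he.2 with h | h
    · exact (mk_eq_mk_of_teccSetoid h).trans a.2
    · exact (mk_src_eq_mk_tgt (Set.notMem_empty e)).trans ((mk_eq_mk_of_teccSetoid h).trans a.2)

lemma isCutEdge_of_mk_ne_mk {e : E}
    (h : Quotient.mk (teccSetoid src tgt) (src e) ≠ Quotient.mk (teccSetoid src tgt) (tgt e)) :
    IsCutEdge src tgt e := by
  by_contra he
  exact h (mk_src_eq_mk_tgt he)

variable [Fintype V]

variable (src tgt) in
lemma frak_eq_sum_two_sub_teccDeg : frak src tgt = ∑ c, (2 - teccDeg src tgt c) := by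
  rw [frak, Nat.card_eq_fintype_card, Nat.card_eq_fintype_card, Fintype.card_subtype,
    Fintype.card_subtype, Finset.card_filter, Finset.card_filter, Finset.mul_sum,
    ← Finset.sum_add_distrib]
  refine Finset.sum_congr rfl fun c _ => ?_
  split_ifs <;> omega

variable (src tgt) in
lemma frak_eq_sum_comp :
    frak src tgt = ∑ C : Comp src tgt, frak (compSrc src tgt C) (compTgt src tgt C) := by
  let toTecc : (Σ C, Quotient (teccSetoid (compSrc src tgt C) (compTgt src tgt C))) →
      Quotient (teccSetoid src tgt) := fun c =>
    Quotient.map Subtype.val (fun _ _ => teccSetoid_comp_iff.mp) c.2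
  have hbij : toTecc.Bijective := by
    constructor
    · rintro ⟨C, c⟩ ⟨D, d⟩ h
      obtain ⟨⟨a, rfl⟩, rfl⟩ := Quotient.exists_rep c
      obtain ⟨⟨b, hb⟩, rfl⟩ := Quotient.exists_rep d
      have hab : teccSetoid src tgt a b := Quotient.exact h
      obtain rfl : Quotient.mk _ a = D := (mk_eq_mk_of_teccSetoid hab).trans hb
      exact congrArg (Sigma.mk _) (Quotient.sound (teccSetoid_comp_iff.mpr hab))
    · intro c
      obtain ⟨a, rfl⟩ := Quotient.exists_rep c
      exact ⟨⟨_, Quotient.mk _ ⟨a, rfl⟩⟩, rfl⟩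
  simp_rw [frak_eq_sum_two_sub_teccDeg]
  rw [← Fintype.sum_sigma', ← hbij.sum_comp]
  refine Fintype.sum_congr _ _ ?_
  rintro ⟨C, c⟩
  obtain ⟨a, rfl⟩ := Quotient.exists_rep c
  exact congrArg _ (teccDeg_comp a).symm

end Leaves

section ColorLeaves

variable {V E : Type} {src tgt : E → V} {L : ℕ} {col : E → Fin L} {ℓ : Fin L} {U : Type}

lemma ncard_colorBoundary_le_teccDeg [Finite E] (p : ColorVtx src tgt col ℓ → U)
    (c : Quotient (teccSetoid (p ∘ colorSrc src tgt col ℓ) (p ∘ colorTgt src tgt col ℓ))) :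
    (colorBoundary src tgt col ℓ (Subtype.val '' {v | Quotient.mk _ (p v) = c})).ncard ≤
      teccDeg (p ∘ colorSrc src tgt col ℓ) (p ∘ colorTgt src tgt col ℓ) c := by
  rw [← Nat.card_coe_set_eq, teccDeg]
  have hmem : ∀ v : ColorVtx src tgt col ℓ,
      v.1 ∈ (Subtype.val '' {v | Quotient.mk _ (p v) = c} : Set V) ↔ Quotient.mk _ (p v) = c :=
    fun v => Subtype.val_injective.mem_set_image
  have hcross : ∀ (e) (he : e ∈ colorBoundary src tgt col ℓ
        (Subtype.val '' {v | Quotient.mk _ (p v) = c})),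
      ¬ (Quotient.mk _ (p (colorSrc src tgt col ℓ ⟨e, he.1⟩)) = c ↔
        Quotient.mk _ (p (colorTgt src tgt col ℓ ⟨e, he.1⟩)) = c) := by
    intro e he
    rw [← hmem, ← hmem]
    exact he.2
  refine Nat.card_le_card_of_injective (fun e => ⟨⟨e.1, e.2.1⟩, ?_, ?_⟩) ?_
  · exact isCutEdge_of_mk_ne_mk fun h => hcross e.1 e.2 (Eq.congr_left h)
  · have := hcross e.1 e.2
    tauto
  · intro e e' h
    simpa [Subtype.ext_iff] using h

lemma frak_comp_le_leafBound [Fintype V] [Finite E] (hcut : ∀ e, ¬ IsCutEdge src tgt e)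
    {p : ColorVtx src tgt col ℓ → U} (hp : p.Surjective) :
    frak (p ∘ colorSrc src tgt col ℓ) (p ∘ colorTgt src tgt col ℓ) ≤ leafBound src tgt col ℓ := by
  have := Fintype.ofSurjective p hp
  rw [frak_eq_sum_two_sub_teccDeg]
  refine (Finset.sum_le_sum fun c _ => Nat.sub_le_sub_left
    (ncard_colorBoundary_le_teccDeg p c) 2).trans
    (sum_two_sub_ncard_colorBoundary_le hcut ℓ ?_ fun c => ?_)
  · intro c c' hc
    refine Set.disjoint_left.mpr ?_
    rintro _ ⟨v, rfl, rfl⟩ ⟨v', rfl, hv'⟩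
    exact hc (by rw [← Subtype.val_injective hv'])
  · obtain ⟨u, rfl⟩ := Quotient.exists_rep c
    obtain ⟨v, rfl⟩ := hp u
    exact ⟨v.1, ⟨v, rfl, rfl⟩, v.exists_memCC⟩

end ColorLeaves

/-! ### Traffic sums -/

/-- The equivalence relation generated by a set of pairs. -/
def pairSetoid {V : Type*} (t : Set (V × V)) : Setoid V :=
  Relation.EqvGen.setoid fun a b => (a, b) ∈ t

lemma pairSetoid_le_ker_iff {V X : Type*} {t : Set (V × V)} {φ : V → X} :
    pairSetoid t ≤ Setoid.ker φ ↔ ∀ x ∈ t, φ x.1 = φ x.2 :=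
  ⟨fun h _ hx => h (Relation.EqvGen.rel _ _ hx), fun h => Setoid.eqvGen_le fun _ _ hab => h _ hab⟩

section TrafficSums

variable {V E X R : Type*} [Fintype V] [Fintype E] [Fintype X]

/-- The weight of a vertex labelling: the product of the matrix entries it selects. -/
def trafficWeight [CommMonoid R] (src tgt : E → V) (M : E → Matrix X X R) (φ : V → X) : R :=
  ∏ e, M e (φ (tgt e)) (φ (src e))

/-- The sum of the weights of all vertex labellings. For matrices `A ω` depending on a random
parameter it is the observable whose normalized expectation is the trace `τ`. -/
def trafficSum [CommSemiring R] (src tgt : E → V) (M : E → Matrix X X R) : R :=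
  ∑ φ : V → X, trafficWeight src tgt M φ

/-- The sum of the weights of the injective vertex labellings; it is the observable behind the
injective trace `τ⁰`. -/
def injTrafficSum [DecidableEq X] [CommSemiring R] (src tgt : E → V) (M : E → Matrix X X R) : R :=
  ∑ φ : V → X with Function.Injective φ, trafficWeight src tgt M φ

lemma trafficSum_eq_prod_comp {V E : Type} [Fintype V] [Fintype E] [CommSemiring R]
    (src tgt : E → V) (M : E → Matrix X X R) :
    trafficSum src tgt M =
      ∏ C : Comp src tgt, trafficSum (compSrc src tgt C) (compTgt src tgt C) fun e => M e.1 := by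
  let restrict : (V → X) ≃ ((C : Comp src tgt) → CompVtx src tgt C → X) :=
    { toFun := fun φ _ v => φ v.1
      invFun := fun p v => p (Quotient.mk _ v) ⟨v, rfl⟩
      left_inv := fun _ => rfl
      right_inv := fun p => by
        funext C ⟨v, hv⟩
        subst hv
        rfl }
  unfold trafficSum
  rw [Finset.prod_univ_sum]
  refine Finset.sum_equiv restrict (by simp) fun φ _ => ?_
  exact (Fintype.prod_fiberwise (fun e => Quotient.mk (connSetoid src tgt ∅) (src e))
    (fun e => M e (φ (tgt e)) (φ (src e)))).symm

lemma trafficSum_quotient [CommSemiring R] (s : Setoid V) (src tgt : E → V)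
    (M : E → Matrix X X R) :
    trafficSum (Quotient.mk s ∘ src) (Quotient.mk s ∘ tgt) M =
      ∑ φ : V → X with s ≤ Setoid.ker φ, trafficWeight src tgt M φ := by
  rw [← Finset.sum_subtype_eq_sum_filter]
  exact Finset.sum_equiv (Setoid.liftEquiv s).symm (by simp) fun _ _ => rfl

lemma injTrafficSum_eq_sum_trafficSum [DecidableEq X] [CommRing R] (src tgt : E → V)
    (M : E → Matrix X X R) :
    injTrafficSum src tgt M =
      ∑ t ∈ (Finset.univ : Finset V).offDiag.powerset, (-1) ^ t.card *
        trafficSum (Quotient.mk (pairSetoid (t : Set (V × V))) ∘ src)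
          (Quotient.mk (pairSetoid (t : Set (V × V))) ∘ tgt) M := by
  have hinj : Finset.univ.filter (fun φ : V → X => Function.Injective φ) =
      (Finset.univ : Finset V).offDiag.inf
        fun x => (Finset.univ.filter fun φ : V → X => φ x.1 = φ x.2)ᶜ := by
    ext φ
    rw [Finset.mem_filter_univ]
    simp [Finset.mem_inf, Function.Injective, not_imp_not]
  rw [injTrafficSum, hinj, Finset.inclusion_exclusion_sum_inf_compl]
  refine Finset.sum_congr rfl fun t _ => ?_
  rw [trafficSum_quotient, zsmul_eq_mul, Int.cast_pow, Int.cast_neg, Int.cast_one]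
  refine congrArg _ (Finset.sum_congr ?_ fun _ _ => rfl)
  ext φ
  simp [Finset.mem_inf, pairSetoid_le_ker_iff]

lemma card_filter_injective [DecidableEq X] :
    (Finset.univ.filter fun φ : V → X => Function.Injective φ).card =
      (Fintype.card X).descFactorial (Fintype.card V) := by
  rw [← Fintype.card_subtype, Fintype.card_congr (Equiv.subtypeInjectiveEquivEmbedding V X),
    Fintype.card_embedding_eq]

end TrafficSums

lemma trace_eval {L : ℕ} {K : Type} (g : GraphMonomial L K) (hg : g.vin = g.vout) {N : ℕ}
    (A : Fin L → K → Matrix (Fin N) (Fin N) ℂ) :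
    Matrix.trace (g.eval A) = trafficSum g.src g.tgt fun e => A (g.labL e) (g.labK e) := by
  simp only [Matrix.trace, Matrix.diag, GraphMonomial.eval, Matrix.of_apply, hg, and_self]
  rw [Finset.sum_comm]
  simp [trafficSum, trafficWeight]

/-! ### Orders of growth -/

lemma isBigO_natCast_rpow_rpow_of_le {a b : ℝ} (hab : a ≤ b) :
    (fun N : ℕ => (N : ℝ) ^ a) =O[atTop] fun N : ℕ => (N : ℝ) ^ b := by
  refine IsBigO.of_norm_eventuallyLE ?_
  filter_upwards [eventually_ge_atTop 1] with N hN
  rw [Real.norm_of_nonneg (by positivity)]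
  exact Real.rpow_le_rpow_of_exponent_le (by exact_mod_cast hN) hab

lemma isBigO_descFactorial (k : ℕ) :
    (fun N : ℕ => (N.descFactorial k : ℂ)) =O[atTop] fun N : ℕ => (N : ℝ) ^ (k : ℝ) := by
  refine isBigO_of_le _ fun N => ?_
  rw [Complex.norm_natCast, Real.rpow_natCast, norm_pow, Real.norm_natCast]
  exact_mod_cast Nat.descFactorial_le_pow _ _

lemma isBigO_inv_descFactorial (k : ℕ) :
    (fun N : ℕ => (N.descFactorial k : ℂ)⁻¹) =O[atTop] fun N : ℕ => (N : ℝ) ^ (-(k : ℝ)) := by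
  refine IsBigO.of_bound ((2 : ℝ) ^ k) ?_
  filter_upwards [eventually_gt_atTop (2 * k)] with N hN
  have hN0 : (0 : ℝ) < N := by exact_mod_cast (by omega : 0 < N)
  have hlower : ((N : ℝ) / 2) ^ k ≤ (N.descFactorial k : ℝ) :=
    calc ((N : ℝ) / 2) ^ k
      _ ≤ ((N + 1 - k : ℕ) : ℝ) ^ k := by
        gcongr
        rw [div_le_iff₀ two_pos]
        exact_mod_cast (by omega : N ≤ (N + 1 - k) * 2)
      _ ≤ (N.descFactorial k : ℝ) := by exact_mod_cast Nat.pow_sub_le_descFactorial N k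
  rw [norm_inv, Complex.norm_natCast, Real.rpow_neg hN0.le, Real.rpow_natCast, norm_inv, norm_pow,
    Real.norm_natCast]
  calc (N.descFactorial k : ℝ)⁻¹
    _ ≤ (((N : ℝ) / 2) ^ k)⁻¹ := inv_anti₀ (by positivity) hlower
    _ = 2 ^ k * ((N : ℝ) ^ k)⁻¹ := by rw [div_pow, inv_div, div_eq_mul_inv]

/-! ### Expected traffic sums -/

section Expectations

variable {Ω : Type} [MeasurableSpace Ω] {μ : Measure Ω} {V E : Type} [Fintype E] {N : ℕ}

lemma integrable_trafficWeight [IsFiniteMeasure μ] (src tgt : E → V)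
    {M : E → Ω → Matrix (Fin N) (Fin N) ℂ} (hmeas : ∀ e, EntriesMeasurable (M e))
    (hbdd : ∀ e, EntriesBounded μ (M e)) (φ : V → Fin N) :
    Integrable (fun ω => trafficWeight src tgt (fun e => M e ω) φ) μ := by
  choose C hC using hbdd
  refine Integrable.of_bound
    (Finset.measurable_prod _ fun e _ => hmeas e _ _).aestronglyMeasurable (∏ e, C e) ?_
  filter_upwards [ae_all_iff.mpr hC] with ω hω
  rw [trafficWeight, norm_prod]
  exact Finset.prod_le_prod (fun _ _ => norm_nonneg _) fun e _ => hω e _ _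

lemma integral_injTrafficSum [IsFiniteMeasure μ] [Fintype V] (src tgt : E → V)
    {M : E → Ω → Matrix (Fin N) (Fin N) ℂ} (hmeas : ∀ e, EntriesMeasurable (M e))
    (hbdd : ∀ e, EntriesBounded μ (M e)) :
    ∫ ω, injTrafficSum src tgt (fun e => M e ω) ∂μ =
      ∑ φ : V → Fin N with Function.Injective φ,
        ∫ ω, trafficWeight src tgt (fun e => M e ω) φ ∂μ :=
  integral_finsetSum _ fun _ _ => integrable_trafficWeight src tgt hmeas hbdd _

section PermInvariant

variable {K : Type} {B : K → Ω → Matrix (Fin N) (Fin N) ℂ}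

lemma PermInvariant.integral_trafficWeight_eq [Finite V] (hperm : PermInvariant μ B)
    (hmeas : ∀ k, EntriesMeasurable (B k)) (src tgt : E → V) (kk : E → K) {φ ψ : V → Fin N}
    (hφ : φ.Injective) (hψ : ψ.Injective) :
    ∫ ω, trafficWeight src tgt (fun e => B (kk e) ω) φ ∂μ =
      ∫ ω, trafficWeight src tgt (fun e => B (kk e) ω) ψ ∂μ := by
  obtain ⟨σ, hσ⟩ := Equiv.Perm.exists_extending_pair ψ φ hψ hφ
  let weight : (K → Fin N → Fin N → ℂ) → ℂ := fun x => ∏ e, x (kk e) (ψ (tgt e)) (ψ (src e))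
  have hweight : Measurable weight := by fun_prop
  have hentries (τ : Equiv.Perm (Fin N)) :
      Measurable fun ω (k : K) (i j : Fin N) => B k ω (τ i) (τ j) :=
    measurable_pi_lambda _ fun k => measurable_pi_lambda _ fun i =>
      measurable_pi_lambda _ fun j => hmeas k _ _
  calc ∫ ω, trafficWeight src tgt (fun e => B (kk e) ω) φ ∂μ
      = ∫ ω, weight (fun k i j => B k ω (σ i) (σ j)) ∂μ := by
        simp only [trafficWeight, weight, hσ]
    _ = ∫ x, weight x ∂μ.map (fun ω k i j => B k ω (σ i) (σ j)) :=
        (integral_map (hentries σ).aemeasurable hweight.aestronglyMeasurable).symm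
    _ = ∫ x, weight x ∂μ.map (fun ω k i j => B k ω i j) := by rw [hperm σ]
    _ = ∫ ω, trafficWeight src tgt (fun e => B (kk e) ω) ψ ∂μ :=
        integral_map (hentries 1).aemeasurable hweight.aestronglyMeasurable

lemma PermInvariant.integral_injTrafficSum_eq [IsFiniteMeasure μ] [Fintype V]
    (hperm : PermInvariant μ B) (hmeas : ∀ k, EntriesMeasurable (B k))
    (hbdd : ∀ k, EntriesBounded μ (B k)) (src tgt : E → V) (kk : E → K) {ψ : V → Fin N}
    (hψ : ψ.Injective) :
    ∫ ω, injTrafficSum src tgt (fun e => B (kk e) ω) ∂μ =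
      N.descFactorial (Fintype.card V) *
        ∫ ω, trafficWeight src tgt (fun e => B (kk e) ω) ψ ∂μ := by
  rw [integral_injTrafficSum src tgt (fun _ => hmeas _) (fun _ => hbdd _)]
  refine (Finset.sum_eq_card_nsmul fun φ hφ => ?_).trans <| by
    rw [card_filter_injective, Fintype.card_fin, nsmul_eq_mul]
  exact hperm.integral_trafficWeight_eq hmeas src tgt kk (Finset.mem_filter_univ _ |>.mp hφ) hψ

end PermInvariant

section Independence

variable {K : Type} {L : ℕ} {B : Fin L → K → Ω → Matrix (Fin N) (Fin N) ℂ}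

lemma integral_trafficWeight_eq_prod_color (hmeas : ∀ ℓ k, EntriesMeasurable (B ℓ k))
    (hindep : iIndep (fun ℓ => famSigma (B ℓ)) μ) (src tgt : E → V) (col : E → Fin L)
    (kk : E → K) (φ : V → Fin N) :
    ∫ ω, trafficWeight src tgt (fun e => B (col e) (kk e) ω) φ ∂μ =
      ∏ ℓ, ∫ ω, trafficWeight (colorSrc src tgt col ℓ) (colorTgt src tgt col ℓ)
        (fun e => B ℓ (kk e.1) ω) (fun v => φ v.1) ∂μ := by
  have hindepFun : iIndepFun (fun ℓ ω => trafficWeight (colorSrc src tgt col ℓ)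
      (colorTgt src tgt col ℓ) (fun e => B ℓ (kk e.1) ω) (fun v => φ v.1)) μ := by
    rw [iIndepFun_iff_iIndep]
    refine iIndep_of_iIndep_of_le hindep fun ℓ => ?_
    rw [← measurable_iff_comap_le]
    refine Finset.measurable_prod _ fun e _ => ?_
    rw [measurable_iff_comap_le]
    exact le_iSup_of_le _ (le_iSup_of_le _ (le_iSup_of_le _ le_rfl))
  rw [← hindepFun.integral_fun_prod_eq_prod_integral fun ℓ =>
    (Finset.measurable_prod _ fun e _ => hmeas ℓ _ _ _).aestronglyMeasurable]
  refine integral_congr_ae (Eventually.of_forall fun ω => ?_)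
  refine (Fintype.prod_fiberwise col _).symm.trans ?_
  refine Finset.prod_congr rfl fun ℓ _ => Finset.prod_congr rfl ?_
  rintro ⟨e, rfl⟩ _
  rfl

lemma integral_injTrafficSum_eq_prod_color [IsFiniteMeasure μ] [Fintype V]
    (hmeas : ∀ ℓ k, EntriesMeasurable (B ℓ k)) (hbdd : ∀ ℓ k, EntriesBounded μ (B ℓ k))
    (hindep : iIndep (fun ℓ => famSigma (B ℓ)) μ) (hperm : ∀ ℓ, PermInvariant μ (B ℓ))
    (src tgt : E → V) (col : E → Fin L) (kk : E → K) :
    ∫ ω, injTrafficSum src tgt (fun e => B (col e) (kk e) ω) ∂μ =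
      N.descFactorial (Fintype.card V) *
        ∏ ℓ, ((N.descFactorial (Fintype.card (ColorVtx src tgt col ℓ)) : ℂ)⁻¹ *
          ∫ ω, injTrafficSum (colorSrc src tgt col ℓ) (colorTgt src tgt col ℓ)
            (fun e => B ℓ (kk e.1) ω) ∂μ) := by
  rw [integral_injTrafficSum src tgt (fun _ => hmeas _ _) (fun _ => hbdd _ _)]
  refine (Finset.sum_eq_card_nsmul fun φ hφ => ?_).trans <| by
    rw [card_filter_injective, Fintype.card_fin, nsmul_eq_mul]
  rw [integral_trafficWeight_eq_prod_color hmeas hindep]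
  refine Finset.prod_congr rfl fun ℓ _ => ?_
  have hφℓ : Function.Injective fun v : ColorVtx src tgt col ℓ => φ v.1 :=
    (Finset.mem_filter_univ _ |>.mp hφ).comp Subtype.val_injective
  have hcard : Fintype.card (ColorVtx src tgt col ℓ) ≤ N := by
    simpa using Fintype.card_le_of_injective _ hφℓ
  have hne : (N.descFactorial (Fintype.card (ColorVtx src tgt col ℓ)) : ℂ) ≠ 0 := by
    simpa [Nat.descFactorial_eq_zero_iff_lt] using hcard
  rw [(hperm ℓ).integral_injTrafficSum_eq (hmeas ℓ) (hbdd ℓ) _ _ _ hφℓ, inv_mul_cancel_left₀ hne]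

end Independence

section GrowthBound

variable {K : Type} {L : ℕ} {A : (N : ℕ) → Fin L → K → Ω → Matrix (Fin N) (Fin N) ℂ} {ℓ : Fin L}

lemma MSBound.isBigO_integral_prod_trace (hms : MSBound μ A ℓ) {ι : Type} [Fintype ι]
    (gs : ι → GraphMonomial L K) (hconn : ∀ i, IsConnectedGraph (gs i).src (gs i).tgt)
    (hlab : ∀ i e, (gs i).labL e = ℓ) (hroot : ∀ i, (gs i).vin = (gs i).vout) :
    (fun N : ℕ => ∫ ω, ∏ i, Matrix.trace ((gs i).eval fun ℓ' k => A N ℓ' k ω) ∂μ) =O[atTop]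
      fun N : ℕ => (N : ℝ) ^ ((∑ i, (frak (gs i).src (gs i).tgt : ℝ)) / 2) := by
  rcases isEmpty_or_nonempty ι with hι | hι
  · simpa using isBigO_const_const (μ.real Set.univ : ℂ) (one_ne_zero (α := ℝ)) _
  · let number := (Fintype.equivFin ι).symm
    have h := hms _ Fintype.card_pos (gs ∘ number) fun i => ⟨hconn _, hlab _, hroot _⟩
    simpa only [Function.comp_apply, number.sum_comp fun i => (frak (gs i).src (gs i).tgt : ℝ),
      fun N ω => number.prod_comp fun i => Matrix.trace ((gs i).eval fun ℓ' k => A N ℓ' k ω)]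
      using h

/-- The component `C` of an edge-labelled multigraph as a graph monomial in the family `ℓ`, both
roots being an arbitrary vertex of `C`. -/
def compMonomial (src tgt : E → V) [Fintype V] (ℓ : Fin L) (kk : E → K) (C : Comp src tgt) :
    GraphMonomial L K where
  V := CompVtx src tgt C
  E := CompEdge src tgt C
  fintV := inferInstance
  fintE := inferInstance
  src := compSrc src tgt C
  tgt := compTgt src tgt C
  vin := ⟨C.out, C.out_eq⟩
  vout := ⟨C.out, C.out_eq⟩
  labL := fun _ => ℓ
  labK := fun e => kk e.1

lemma MSBound.isBigO_integral_trafficSum [Fintype V] (hms : MSBound μ A ℓ) (src tgt : E → V)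
    (kk : E → K) :
    (fun N : ℕ => ∫ ω, trafficSum src tgt (fun e => A N ℓ (kk e) ω) ∂μ) =O[atTop]
      fun N : ℕ => (N : ℝ) ^ ((frak src tgt : ℝ) / 2) := by
  have htrace (N : ℕ) (ω : Ω) : trafficSum src tgt (fun e => A N ℓ (kk e) ω) =
      ∏ C, Matrix.trace ((compMonomial src tgt ℓ kk C).eval fun ℓ' k => A N ℓ' k ω) := by
    rw [trafficSum_eq_prod_comp]
    exact Finset.prod_congr rfl fun C _ =>
      (trace_eval (compMonomial src tgt ℓ kk C) rfl fun ℓ' k => A N ℓ' k ω).symm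
  simp only [htrace, frak_eq_sum_comp src tgt, Nat.cast_sum]
  exact hms.isBigO_integral_prod_trace _ (fun C => isConnectedGraph_comp C) (fun _ _ => rfl)
    fun _ => rfl

lemma MSBound.isBigO_integral_injTrafficSum [IsFiniteMeasure μ] [Fintype V]
    (hms : MSBound μ A ℓ) (hmeas : ∀ N k, EntriesMeasurable (A N ℓ k))
    (hbdd : ∀ N k, EntriesBounded μ (A N ℓ k)) (src tgt : E → V) (kk : E → K) {P : ℕ}
    (hP : ∀ s : Setoid V, frak (Quotient.mk s ∘ src) (Quotient.mk s ∘ tgt) ≤ P) :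
    (fun N : ℕ => ∫ ω, injTrafficSum src tgt (fun e => A N ℓ (kk e) ω) ∂μ) =O[atTop]
      fun N : ℕ => (N : ℝ) ^ ((P : ℝ) / 2) := by
  have hint {W : Type} [Fintype W] (p : V → W) (N : ℕ) : Integrable
      (fun ω => trafficSum (p ∘ src) (p ∘ tgt) fun e => A N ℓ (kk e) ω) μ :=
    integrable_finsetSum _ fun _ _ =>
      integrable_trafficWeight _ _ (fun _ => hmeas _ _) (fun _ => hbdd _ _) _
  have hexpand (N : ℕ) : ∫ ω, injTrafficSum src tgt (fun e => A N ℓ (kk e) ω) ∂μ =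
      ∑ t ∈ (Finset.univ : Finset V).offDiag.powerset, (-1) ^ t.card *
        ∫ ω, trafficSum (Quotient.mk (pairSetoid (t : Set (V × V))) ∘ src)
          (Quotient.mk (pairSetoid (t : Set (V × V))) ∘ tgt) (fun e => A N ℓ (kk e) ω) ∂μ := by
    simp_rw [injTrafficSum_eq_sum_trafficSum]
    rw [integral_finsetSum _ fun t _ => (hint _ _).const_mul _]
    simp_rw [integral_const_mul]
  simp_rw [hexpand]
  refine IsBigO.fun_sum fun t _ => ?_
  refine IsBigO.const_mul_left ?_ _
  refine (hms.isBigO_integral_trafficSum _ _ kk).trans (isBigO_natCast_rpow_rpow_of_le ?_)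
  gcongr
  exact_mod_cast hP _

end GrowthBound

end Expectations

/-! ### The bound for a graph without cut edges -/

section MainBound

variable {Ω : Type} [MeasurableSpace Ω] {μ : Measure Ω} {K : Type} {L : ℕ}
  {A : (N : ℕ) → Fin L → K → Ω → Matrix (Fin N) (Fin N) ℂ}
  {V E : Type} [Fintype V] [Fintype E] {src tgt : E → V} {col : E → Fin L}

lemma isBigO_integral_injTrafficSum_color [IsFiniteMeasure μ] {ℓ : Fin L} (hms : MSBound μ A ℓ)
    (hmeas : ∀ N k, EntriesMeasurable (A N ℓ k)) (hbdd : ∀ N k, EntriesBounded μ (A N ℓ k))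
    (hcut : ∀ e, ¬ IsCutEdge src tgt e) (kk : E → K) :
    (fun N : ℕ => ∫ ω, injTrafficSum (colorSrc src tgt col ℓ) (colorTgt src tgt col ℓ)
        (fun e => A N ℓ (kk e.1) ω) ∂μ) =O[atTop]
      fun N : ℕ => (N : ℝ) ^ ((leafBound src tgt col ℓ : ℝ) / 2) :=
  hms.isBigO_integral_injTrafficSum hmeas hbdd _ _ _ fun _ =>
    frak_comp_le_leafBound hcut Quotient.mk_surjective

theorem isBigO_integral_injTrafficSum_of_not_isTree [IsFiniteMeasure μ] [Nonempty V]
    (hmeas : ∀ N ℓ k, EntriesMeasurable (A N ℓ k)) (hbdd : ∀ N ℓ k, EntriesBounded μ (A N ℓ k))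
    (hindep : IndepFamilies μ A) (hperm : ∀ N ℓ, PermInvariant μ (A N ℓ))
    (hms : ∀ ℓ, MSBound μ A ℓ) (hconn : IsConnectedGraph src tgt)
    (hcut : ∀ e, ¬ IsCutEdge src tgt e) (htree : ¬ (gccGraph src tgt col).IsTree)
    (kk : E → K) :
    (fun N : ℕ => ∫ ω, injTrafficSum src tgt (fun e => A N (col e) (kk e) ω) ∂μ) =O[atTop]
      fun _ : ℕ => (1 : ℝ) := by
  let c (ℓ : Fin L) : ℕ := Fintype.card (ColorVtx src tgt col ℓ)
  let P (ℓ : Fin L) : ℕ := leafBound src tgt col ℓ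
  have hexponent : (Fintype.card V : ℝ) + ∑ ℓ, (-(c ℓ : ℝ) + P ℓ / 2) ≤ 0 := by
    have hcount : (2 * Fintype.card V + ∑ ℓ, (P ℓ : ℝ) : ℝ) ≤ 2 * ∑ ℓ, (c ℓ : ℝ) := by
      exact_mod_cast two_mul_card_add_sum_leafBound_le hconn htree
    rw [Finset.sum_add_distrib, Finset.sum_neg_distrib, ← Finset.sum_div]
    linarith
  have hprod := (isBigO_descFactorial (Fintype.card V)).mul <|
    IsBigO.finsetProd (s := Finset.univ) fun ℓ _ => (isBigO_inv_descFactorial (c ℓ)).mul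
      (isBigO_integral_injTrafficSum_color (col := col) (hms ℓ) (fun N => hmeas N ℓ)
        (fun N => hbdd N ℓ) hcut kk)
  simp_rw [fun N => integral_injTrafficSum_eq_prod_color (hmeas N) (hbdd N) (hindep N) (hperm N)
    src tgt col kk]
  refine (hprod.congr' .rfl ?_).trans (isBigO_natCast_rpow_rpow_of_le hexponent) |>.congr_right ?_
  · filter_upwards [eventually_gt_atTop 0] with N hN
    have hN' : (0 : ℝ) < N := by exact_mod_cast hN
    simp_rw [← Real.rpow_add hN']
    rw [← Real.rpow_sum_of_pos hN', ← Real.rpow_add hN']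
  · simp

/-- The test graph carrying the matrix `B (col e) (kk e)` on the edge `e`. -/
def labelledTestGraph (src tgt : E → V) (col : E → Fin L) (kk : E → K) {N : ℕ}
    (B : Fin L → K → Ω → Matrix (Fin N) (Fin N) ℂ) : TestGraph N Ω where
  V := V
  E := E
  fintV := inferInstance
  fintE := inferInstance
  src := src
  tgt := tgt
  lab := fun e => B (col e) (kk e)

theorem tau0_bigO_inv_of_gcc_not_tree_general [IsFiniteMeasure μ] [Nonempty V]
    (hmeas : ∀ N ℓ k, EntriesMeasurable (A N ℓ k)) (hbdd : ∀ N ℓ k, EntriesBounded μ (A N ℓ k))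
    (hindep : IndepFamilies μ A) (hperm : ∀ N ℓ, PermInvariant μ (A N ℓ))
    (hms : ∀ ℓ, MSBound μ A ℓ) (hconn : IsConnectedGraph src tgt)
    (hcut : ∀ e, ¬ IsCutEdge src tgt e) (htree : ¬ (gccGraph src tgt col).IsTree)
    (kk : E → K) :
    (fun N : ℕ => (labelledTestGraph src tgt col kk (A N)).tau0 μ) =O[atTop]
      fun N : ℕ => (N : ℝ)⁻¹ := by
  have htau (N : ℕ) : (labelledTestGraph src tgt col kk (A N)).tau0 μ =
      (N : ℂ)⁻¹ * ∫ ω, injTrafficSum src tgt (fun e => A N (col e) (kk e) ω) ∂μ := by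
    have hncc : (labelledTestGraph src tgt col kk (A N)).ncc = 1 :=
      ncomp_eq_one (V := V) hconn
    rw [TestGraph.tau0, hncc, pow_one]
    simp only [injTrafficSum, Finset.sum_filter]
    congr!
  have hinv : (fun N : ℕ => (N : ℂ)⁻¹) =O[atTop] fun N : ℕ => (N : ℝ)⁻¹ :=
    isBigO_of_le _ fun N => by simp
  simp_rw [htau]
  simpa using hinv.mul (isBigO_integral_injTrafficSum_of_not_isTree hmeas hbdd hindep hperm hms
    hconn hcut htree kk)

end MainBound

/-! ### The glued graph -/

lemma nxt_iterate_val {n : ℕ} (i : Fin n) (k : ℕ) : (nxt^[k] i : ℕ) = (i + k) % n := by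
  induction k with
  | zero => exact (Nat.mod_eq_of_lt i.isLt).symm
  | succ k ih =>
    rw [Function.iterate_succ_apply', ← add_assoc, ← Nat.mod_add_mod, ← ih]
    rfl

lemma nxt_induction {n : ℕ} {P : Fin n → Prop} (i₀ : Fin n) (zero : P (nxt i₀))
    (step : ∀ i, i ≠ i₀ → P i → P (nxt i)) (i : Fin n) : P i := by
  have hiter : ∀ k, P (nxt^[k + 1] i₀) := by
    intro k
    induction k with
    | zero => exact zero
    | succ k ih =>
      rw [Function.iterate_succ_apply']
      by_cases hk : nxt^[k + 1] i₀ = i₀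
      · rwa [hk]
      · exact step _ hk ih
  have hi : nxt^[n - 1 - i₀ + i + 1] i₀ = i := by
    apply Fin.ext
    rw [nxt_iterate_val, show (i₀ + (n - 1 - i₀ + i + 1) : ℕ) = i + n by omega,
      Nat.add_mod_right, Nat.mod_eq_of_lt i.isLt]
  exact hi ▸ hiter _

section Glued

variable {L : ℕ} {K : Type}

lemma GraphMonomial.reachOn_step (m : GraphMonomial L K) {F : Set m.E} {s : m.E × Bool}
    (hs : s.1 ∉ F) : _root_.reachOn m.src m.tgt F (m.stepSrc s) (m.stepTgt s) := by
  obtain ⟨e, _ | _⟩ := s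
  · exact reachOn_symm (reachOn_edge hs)
  · exact reachOn_edge hs

lemma GraphMonomial.IsSimpleCycle.not_isCutEdge {m : GraphMonomial L K} {c : List (m.E × Bool)}
    (hc : m.IsSimpleCycle c) {e : m.E} (he : e ∈ c.map Prod.fst) :
    ¬ IsCutEdge m.src m.tgt e := by
  obtain ⟨_, hstep, hnodup, -⟩ := hc
  obtain ⟨s, hs, rfl⟩ := List.mem_map.mp he
  obtain ⟨i, rfl⟩ := List.get_of_mem hs
  have hne : ∀ j, j ≠ i → (c.get j).1 ∉ ({(c.get i).1} : Set m.E) := by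
    intro j hj h
    exact hj (Fin.ext ((List.Nodup.getElem_inj_iff hnodup (hi := by simp) (hj := by simp)).mp
      (by simpa using h)))
  have hround : ∀ j, reachOn m.src m.tgt {(c.get i).1} (m.stepTgt (c.get i))
      (m.stepSrc (c.get j)) := by
    intro j
    induction j using nxt_induction i with
    | zero =>
      rw [hstep i]
      exact .refl
    | step j hj ih => exact (ih.trans (m.reachOn_step (hne j hj))).trans (hstep j ▸ .refl)
  have hback := hround i
  rw [IsCutEdge, not_not]
  unfold GraphMonomial.stepSrc GraphMonomial.stepTgt at hback
  split_ifs at hback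
  · exact reachOn_symm hback
  · exact hback

lemma GraphMonomial.IsOrientedCactus.not_isCutEdge {m : GraphMonomial L K}
    (hm : m.IsOrientedCactus) (e : m.E) : ¬ IsCutEdge m.src m.tgt e := by
  obtain ⟨S, ⟨⟨c, hc, rfl⟩, he⟩, -⟩ := hm.2.2 e
  exact hc.not_isCutEdge (List.mem_toFinset.mp he)

variable {n : ℕ} {d : Fin n → ℕ} {g : Fin n → ℕ → GraphMonomial L K} {F : Set (BigE n d g)}

lemma mk_inVtx_eq_mk_outVtx (i : Fin n) :
    Quotient.mk (glueSetoid n d g) (inVtx n d g i) = Quotient.mk _ (outVtx n d g (nxt i)) :=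
  Quotient.sound (Relation.EqvGen.rel _ _ ⟨i, rfl, rfl⟩)

lemma reachOn_pathVtx (i : Fin n) {a b : Fin (d i + 1)} (hab : a ≤ b)
    (hF : ∀ j : Fin (d i), a ≤ j.castSucc → j.castSucc < b → Sum.inr ⟨i, j⟩ ∉ F) :
    reachOn (bigSrc n d g) (bigTgt n d g) F
      (Quotient.mk _ (pathVtx n d g i a)) (Quotient.mk _ (pathVtx n d g i b)) := by
  induction b using Fin.induction with
  | zero => rw [Fin.le_zero_iff.mp hab]; exact .refl
  | succ j ih =>
    obtain rfl | hlt := hab.eq_or_lt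
    · exact .refl
    · have haj : a ≤ j.castSucc := Fin.le_castSucc_iff.mpr hlt
      refine (ih haj fun j' h h' => hF j' h (h'.trans j.castSucc_lt_succ)).trans ?_
      exact reachOn_symm (reachOn_edge (hF j haj j.castSucc_lt_succ))

lemma reachOn_inVtx_outVtx (i₀ : Fin n)
    (hF : ∀ i, i ≠ i₀ → ∀ j : Fin (d i), Sum.inr ⟨i, j⟩ ∉ F) (i : Fin n) :
    reachOn (bigSrc n d g) (bigTgt n d g) F
      (Quotient.mk _ (inVtx n d g i₀)) (Quotient.mk _ (outVtx n d g i)) := by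
  induction i using nxt_induction i₀ with
  | zero =>
    rw [mk_inVtx_eq_mk_outVtx]
    exact .refl
  | step i hi ih =>
    rw [← mk_inVtx_eq_mk_outVtx]
    exact ih.trans (reachOn_pathVtx i (Fin.zero_le _) fun j _ _ => hF i hi j)

lemma reachOn_cactus {i : Fin n} {j : Fin (d i + 1)} {F' : Set (g i j).E}
    (hF : ∀ e ∉ F', Sum.inl ⟨i, j, e⟩ ∉ F) {v w : (g i j).V}
    (h : reachOn (g i j).src (g i j).tgt F' v w) :
    reachOn (bigSrc n d g) (bigTgt n d g) F
      (Quotient.mk _ (⟨i, j, v⟩ : BigV n d g)) (Quotient.mk _ (⟨i, j, w⟩ : BigV n d g)) :=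
  reachOn_map (p := fun v => Quotient.mk _ (⟨i, j, v⟩ : BigV n d g))
    (fun e he => reachOn_edge (e := (Sum.inl ⟨i, j, e⟩ : BigE n d g)) (hF e he)) h

lemma isConnectedGraph_big (hg : ∀ i (j : Fin (d i + 1)), (g i j).IsOrientedCactus) :
    IsConnectedGraph (bigSrc n d g) (bigTgt n d g) := by
  have hreach (i₀ : Fin n) (x : BigV n d g) : reachOn (bigSrc n d g) (bigTgt n d g) ∅
      (Quotient.mk _ (inVtx n d g i₀)) (Quotient.mk _ x) := by
    obtain ⟨i, j, v⟩ := x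
    refine (reachOn_inVtx_outVtx i₀ (fun _ _ _ => id) i).trans
      ((reachOn_pathVtx i (Fin.zero_le j) fun _ _ _ => id).trans ?_)
    exact reachOn_cactus (F' := ∅) (fun _ _ => id) ((hg i j).1 _ _)
  rintro ⟨x⟩ ⟨y⟩
  exact (reachOn_symm (hreach x.1 x)).trans (hreach x.1 y)

lemma not_isCutEdge_big_path (i : Fin n) (j : Fin (d i)) :
    ¬ IsCutEdge (bigSrc n d g) (bigTgt n d g) (Sum.inr ⟨i, j⟩) := by
  have hne : ∀ j', j' ≠ j → (Sum.inr ⟨i, j'⟩ : BigE n d g) ∉ ({Sum.inr ⟨i, j⟩} : Set _) := by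
    rintro j' hj' h
    exact hj' (by simpa using h)
  have hin : reachOn (bigSrc n d g) (bigTgt n d g) {Sum.inr ⟨i, j⟩}
      (Quotient.mk _ (pathVtx n d g i j.succ)) (Quotient.mk _ (inVtx n d g i)) := by
    refine reachOn_pathVtx i (Fin.le_last _) fun j' hj' _ => hne j' ?_
    rintro rfl
    exact hj'.not_gt j'.castSucc_lt_succ
  have haround : reachOn (bigSrc n d g) (bigTgt n d g) {Sum.inr ⟨i, j⟩}
      (Quotient.mk _ (inVtx n d g i)) (Quotient.mk _ (outVtx n d g i)) := by
    refine reachOn_inVtx_outVtx i (fun i' hi' j' h => hi' ?_) i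
    exact congrArg Sigma.fst (Sum.inr_injective h)
  have hout : reachOn (bigSrc n d g) (bigTgt n d g) {Sum.inr ⟨i, j⟩}
      (Quotient.mk _ (outVtx n d g i)) (Quotient.mk _ (pathVtx n d g i j.castSucc)) := by
    refine reachOn_pathVtx i (Fin.zero_le _) fun j' _ hj' => hne j' ?_
    rintro rfl
    exact hj'.false
  exact not_not.mpr (hin.trans (haround.trans hout))

lemma not_isCutEdge_big (hg : ∀ i (j : Fin (d i + 1)), (g i j).IsOrientedCactus)
    (e : BigE n d g) : ¬ IsCutEdge (bigSrc n d g) (bigTgt n d g) e := by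
  obtain ⟨i, j, e⟩ | ⟨i, j⟩ := e
  · refine not_not.mpr (reachOn_cactus ?_ (not_not.mp ((hg i j).not_isCutEdge e)))
    intro e' he' h
    cases Sum.inl_injective h
    exact he' rfl
  · exact not_isCutEdge_big_path i j

/-- The index `k` of the matrix `A_{N,ℓ}^{(k)}` carried by each edge of the glued graph `T`, whose
color `ℓ` is given by `bigCol`. -/
def bigLabK (d : Fin n → ℕ) (kv : Fin n → ℕ → K) (g : Fin n → ℕ → GraphMonomial L K) :
    BigE n d g → K
  | Sum.inl ⟨i, j, e⟩ => (g i j).labK e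
  | Sum.inr ⟨i, j⟩ => kv i (j + 1)

lemma quot_bigTG {Ω : Type} {N : ℕ} (ℓv : Fin n → Fin L) (kv : Fin n → ℕ → K)
    (B : Fin L → K → Ω → Matrix (Fin N) (Fin N) ℂ) (π : Setoid (Quotient (glueSetoid n d g))) :
    TestGraph.quot (bigTG n ℓv d kv g N B) π =
      labelledTestGraph (Quotient.mk π ∘ bigSrc n d g) (Quotient.mk π ∘ bigTgt n d g)
        (bigCol n ℓv d g) (bigLabK d kv g) B := by
  have hlab : (bigTG n ℓv d kv g N B).lab =
      fun e => B (bigCol n ℓv d g e) (bigLabK d kv g e) := by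
    funext e
    rcases e with ⟨i, j, e⟩ | ⟨i, j⟩ <;> rfl
  unfold TestGraph.quot labelledTestGraph
  rw [hlab]
  rfl

end Glued

/-- Lemma 4.7.
If the families are independent, permutation invariant, and satisfy the growth
bound (MS), then for every partition `π` of the vertices of the test graph `T`
such that the graph of colored components of `T^π` is not a tree, one has
`τ⁰_N[T^π] = O(N⁻¹)` as `N → ∞`. -/
theorem tau0_bigO_inv_of_gcc_not_tree
    {Ω : Type} [MeasurableSpace Ω] (μ : Measure Ω) [IsProbabilityMeasure μ]
    {K : Type} [Nonempty K] [Finite K] {L : ℕ} (hL : 1 ≤ L)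
    (A : (N : ℕ) → Fin L → K → Ω → Matrix (Fin N) (Fin N) ℂ)
    (hmeas : ∀ N ℓ k, EntriesMeasurable (A N ℓ k))
    (hbdd : ∀ N ℓ k, EntriesBounded μ (A N ℓ k))
    (hindep : IndepFamilies μ A)
    (hperm : ∀ (N : ℕ) (ℓ : Fin L), PermInvariant μ (A N ℓ))
    (hms : ∀ ℓ : Fin L, MSBound μ A ℓ)
    (n : ℕ) (hn : 2 ≤ n) (ℓv : Fin n → Fin L)
    (hadj : ∀ (i : ℕ) (h1 : i + 1 < n),
      ℓv ⟨i, Nat.lt_of_succ_lt h1⟩ ≠ ℓv ⟨i + 1, h1⟩)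
    (d : Fin n → ℕ) (hd : ∀ i, 1 ≤ d i) (kv : Fin n → ℕ → K)
    (g : Fin n → ℕ → GraphMonomial L K)
    (hg : ∀ (i : Fin n) (j : ℕ), j ≤ d i → (g i j).IsCactusType)
    (π : Setoid (Quotient (glueSetoid n d g)))
    (hnottree : ¬ (gccGraph (fun e => Quotient.mk π (bigSrc n d g e))
        (fun e => Quotient.mk π (bigTgt n d g e)) (bigCol n ℓv d g)).IsTree) :
    (fun N : ℕ => TestGraph.tau0 (TestGraph.quot (bigTG n ℓv d kv g N (A N)) π) μ)
      =O[atTop] fun N : ℕ => ((N : ℝ))⁻¹ := by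
  have hcactus : ∀ i (j : Fin (d i + 1)), (g i j).IsOrientedCactus := fun i j => (hg i j j.is_le).2
  have : Nonempty (Quotient π) := ⟨⟦⟦inVtx n d g ⟨0, by omega⟩⟧⟧⟩
  simp_rw [quot_bigTG]
  exact tau0_bigO_inv_of_gcc_not_tree_general hmeas hbdd hindep hperm hms
    ((isConnectedGraph_big hcactus).comp Quotient.mk_surjective)
    (fun e => not_isCutEdge_comp _ (not_isCutEdge_big hcactus e)) hnottree _
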